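/- There exists a universal constant C > 0 such that for every c > 0 and all sufficiently large even N = 2n, the biased random transposition shuffle satisfies d_TV(P^t(id, ·), U) ≤ C·e^{−c}, where t = ⌈(N/(2b))·(log N + c)⌉. -/

import Mathlib

open scoped BigOperators

noncomputable section

namespace BRT

/-- The transition matrix of the biased random transposition shuffle on `𝔖_N` determined
by the set `A ⊆ [N]` (with `B = Aᶜ`) and the bias parameters `a`, `b`:
`P(x,y) = 2a²/N²` if `y x⁻¹` is a transposition of two elements of `A`, `2b²/N²` if it is a
transposition of two elements of `B`, `2ab/N²` if it transposes an element of `A` with one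
of `B`, `(a²|A| + b²|B|)/N²` if `y = x`, and `0` otherwise. -/
def transMat (a b : ℝ) {N : ℕ} (A : Finset (Fin N)) :
    Matrix (Equiv.Perm (Fin N)) (Equiv.Perm (Fin N)) ℝ :=
  fun x y =>
    if y = x then (a ^ 2 * A.card + b ^ 2 * Aᶜ.card) / (N : ℝ) ^ 2
    else if ∃ i j : Fin N, i ≠ j ∧ i ∈ A ∧ j ∈ A ∧ y * x⁻¹ = Equiv.swap i j then
      2 * a ^ 2 / (N : ℝ) ^ 2
    else if ∃ i j : Fin N, i ≠ j ∧ i ∉ A ∧ j ∉ A ∧ y * x⁻¹ = Equiv.swap i j then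
      2 * b ^ 2 / (N : ℝ) ^ 2
    else if ∃ i j : Fin N, i ∈ A ∧ j ∉ A ∧ y * x⁻¹ = Equiv.swap i j then
      2 * a * b / (N : ℝ) ^ 2
    else 0

/-- Total variation distance between two probability mass functions on a finite type. -/
def dTV {α : Type*} [Fintype α] (p q : α → ℝ) : ℝ :=
  (∑ x, |p x - q x|) / 2

/-- The uniform distribution on permutations of `Fin N`. -/
def unif (N : ℕ) : Equiv.Perm (Fin N) → ℝ :=
  fun _ => ((N.factorial : ℝ))⁻¹

set_option linter.unusedSectionVars false
section Abstract
open Equiv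
open scoped RealInnerProductSpace

variable {α : Type*} [Fintype α] [DecidableEq α]
variable {E : Type*} [NormedAddCommGroup E] [InnerProductSpace ℝ E] [FiniteDimensional ℝ E]

/-- `g` fixes every point outside `S`. -/
def Off (S : Finset α) (g : Perm α) : Prop := ∀ y, y ∉ S → g y = y

/-- `w` is fixed by all permutations supported in `R`. -/
def Fxd (ρ : Perm α →* (E →ₗ[ℝ] E)) (R : Finset α) (w : E) : Prop :=
  ∀ g, Off R g → ρ g w = w

/-- Sum of the transpositions `(x m)`, `m ∈ S` (identity included for `m = x`). -/
def starOp (ρ : Perm α →* (E →ₗ[ℝ] E)) (S : Finset α) (x : α) : E →ₗ[ℝ] E :=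
  ∑ m ∈ S, ρ (swap x m)

/-- Sum over ordered pairs. -/
def fullOp (ρ : Perm α →* (E →ₗ[ℝ] E)) (S : Finset α) : E →ₗ[ℝ] E :=
  ∑ x ∈ S, starOp ρ S x

lemma Off.mem {S : Finset α} {g : Perm α} (h : Off S g) {y : α} : g y ∈ S ↔ y ∈ S := by
  constructor
  · intro hy
    by_contra hn
    rw [h y hn] at hy
    exact hn hy
  · intro hy
    by_contra hn
    have := h _ hn
    have h2 := g.injective this
    rw [h2] at hn
    exact hn hy

lemma Off.mono {S S' : Finset α} (hS : S ⊆ S') {g : Perm α} (h : Off S g) : Off S' g :=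
  fun y hy => h y (fun h' => hy (hS h'))

lemma Fxd.mono {ρ : Perm α →* (E →ₗ[ℝ] E)} {S S' : Finset α} (hS : S ⊆ S') {w : E}
    (h : Fxd ρ S' w) : Fxd ρ S w := fun g hg => h g (hg.mono hS)

lemma off_swap {S : Finset α} {x y : α} (hx : x ∈ S) (hy : y ∈ S) : Off S (swap x y) := by
  intro z hz
  apply swap_apply_of_ne_of_ne
  · rintro rfl; exact hz hx
  · rintro rfl; exact hz hy

lemma sum_off {S : Finset α} {g : Perm α} (h : Off S g) {M : Type*} [AddCommMonoid M] (f : α → M) :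
    ∑ m ∈ S, f (g m) = ∑ m ∈ S, f m :=
  Finset.sum_equiv g (fun i => (h.mem).symm) (fun i _ => rfl)

lemma starOp_apply (ρ : Perm α →* (E →ₗ[ℝ] E)) (S : Finset α) (x : α) (v : E) :
    starOp ρ S x v = ∑ m ∈ S, ρ (swap x m) v := by
  simp [starOp, LinearMap.sum_apply]

lemma fullOp_apply (ρ : Perm α →* (E →ₗ[ℝ] E)) (S : Finset α) (v : E) :
    fullOp ρ S v = ∑ x ∈ S, ∑ m ∈ S, ρ (swap x m) v := by
  simp [fullOp, LinearMap.sum_apply, starOp_apply]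

lemma conj_apply (ρ : Perm α →* (E →ₗ[ℝ] E)) (g : Perm α) (x m : α) (v : E) :
    ρ g (ρ (swap x m) v) = ρ (swap (g x) (g m)) (ρ g v) := by
  have : g * swap x m = swap (g x) (g m) * g := Equiv.mul_swap_eq_swap_mul g x m
  calc ρ g (ρ (swap x m) v) = ρ (g * swap x m) v := by rw [map_mul]; rfl
    _ = _ := by rw [this, map_mul]; rfl

lemma starOp_comm (ρ : Perm α →* (E →ₗ[ℝ] E)) {S : Finset α} {x : α} {g : Perm α}
    (h : Off S g) (hx : g x = x) (v : E) : ρ g (starOp ρ S x v) = starOp ρ S x (ρ g v) := by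
  rw [starOp_apply, starOp_apply, map_sum]
  simp_rw [conj_apply, hx]
  exact sum_off h (fun m => ρ (swap x m) (ρ g v))

lemma fullOp_comm (ρ : Perm α →* (E →ₗ[ℝ] E)) {S : Finset α} {g : Perm α}
    (h : Off S g) (v : E) : ρ g (fullOp ρ S v) = fullOp ρ S (ρ g v) := by
  rw [fullOp_apply, fullOp_apply, map_sum]
  simp_rw [map_sum, conj_apply]
  rw [← sum_off h (fun x => ∑ m ∈ S, ρ (swap x m) (ρ g v))]
  refine Finset.sum_congr rfl fun x _ => ?_
  exact sum_off h (fun m => ρ (swap (g x) m) (ρ g v))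

/-- star sum over `insert x R` of an `R`-fixed vector is `insert x R`-fixed. -/
lemma fxd_star {ρ : Perm α →* (E →ₗ[ℝ] E)} {R : Finset α} {x : α} (_hx : x ∉ R) {w : E}
    (hw : Fxd ρ R w) : Fxd ρ (insert x R) (starOp ρ (insert x R) x w) := by
  intro g hg
  rw [starOp_apply, map_sum]
  rw [← sum_off hg (fun m => ρ (swap x m) w)]
  refine Finset.sum_congr rfl fun m hm => ?_
  have hO : Off R (swap x (g m) * g * swap x m) := by
    intro y hy
    by_cases hyx : y = x
    · subst hyx; simp
    · have hym : y ∉ insert x R := by simp [hyx, hy]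
      have h1 : y ≠ m := by rintro rfl; exact hym hm
      have h2 : y ≠ g m := by rintro rfl; exact hym (hg.mem.2 hm)
      simp [swap_apply_of_ne_of_ne hyx h1, hg y hym, swap_apply_of_ne_of_ne hyx h2]
  have h := hw _ hO
  have e : g * swap x m = swap x (g m) * (swap x (g m) * g * swap x m) := by
    rw [mul_assoc, swap_mul_self_mul]
  calc ρ g (ρ (swap x m) w) = ρ (g * swap x m) w := by rw [map_mul]; rfl
    _ = ρ (swap x (g m)) (ρ (swap x (g m) * g * swap x m) w) := by
        rw [e, map_mul]; simp [mul_assoc]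
    _ = _ := by rw [h]

lemma star_fxd {ρ : Perm α →* (E →ₗ[ℝ] E)} {R : Finset α} {x : α} (hx : x ∈ R) {w : E}
    (hw : Fxd ρ R w) : starOp ρ R x w = (R.card : ℝ) • w := by
  rw [starOp_apply, Finset.sum_congr rfl (fun m hm => hw _ (off_swap hx hm))]
  simp [Nat.cast_smul_eq_nsmul]

variable {ρ : Perm α →* (E →ₗ[ℝ] E)} 

lemma swap_symm (hρ : ∀ g v w, ⟪ρ g v, ρ g w⟫ = ⟪v, w⟫) (x y : α) (v w : E) :
    ⟪ρ (swap x y) v, w⟫ = ⟪v, ρ (swap x y) w⟫ := by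
  rw [← hρ (swap x y) (ρ (swap x y) v) w]
  congr 1
  have : ρ (swap x y * swap x y) v = v := by simp
  rw [map_mul] at this
  exact this

lemma starOp_symm (hρ : ∀ g v w, ⟪ρ g v, ρ g w⟫ = ⟪v, w⟫) (S : Finset α) (x : α) :
    (starOp ρ S x).IsSymmetric := by
  intro v w
  simp_rw [starOp_apply, sum_inner, inner_sum, swap_symm hρ]

lemma fullOp_symm (hρ : ∀ g v w, ⟪ρ g v, ρ g w⟫ = ⟪v, w⟫) (S : Finset α) :
    (fullOp ρ S).IsSymmetric := by
  intro v w
  simp_rw [fullOp_apply, sum_inner, inner_sum, swap_symm hρ]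

lemma norm_rho (hρ : ∀ g v w, ⟪ρ g v, ρ g w⟫ = ⟪v, w⟫) (g : Perm α) (v : E) : ‖ρ g v‖ = ‖v‖ := by
  have := hρ g v v
  rw [real_inner_self_eq_norm_sq, real_inner_self_eq_norm_sq] at this
  exact (sq_eq_sq₀ (norm_nonneg _) (norm_nonneg _)).1 this

lemma inner_rho_le (hρ : ∀ g v w, ⟪ρ g v, ρ g w⟫ = ⟪v, w⟫) (g : Perm α) (v : E) :
    ⟪ρ g v, v⟫ ≤ ⟪v, v⟫ := by
  refine (real_inner_le_norm _ _).trans ?_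
  rw [norm_rho hρ, real_inner_self_eq_norm_sq, sq]

lemma neg_le_inner_rho (hρ : ∀ g v w, ⟪ρ g v, ρ g w⟫ = ⟪v, w⟫) (g : Perm α) (v : E) :
    -⟪v, v⟫ ≤ ⟪ρ g v, v⟫ := by
  have := (abs_le.1 (abs_real_inner_le_norm (ρ g v) v)).1
  rwa [norm_rho hρ, ← sq, ← real_inner_self_eq_norm_sq] at this

lemma star_nonneg (hρ : ∀ g v w, ⟪ρ g v, ρ g w⟫ = ⟪v, w⟫) {R : Finset α} {x : α} (hx : x ∉ R) {w : E}
    (hw : Fxd ρ R w) : 0 ≤ ⟪starOp ρ (insert x R) x w, w⟫ := by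
  have h1 := star_fxd (Finset.mem_insert_self x R) (fxd_star hx hw)
  have h2 := starOp_symm hρ (insert x R) x (starOp ρ (insert x R) x w) w
  rw [h1, inner_smul_left] at h2
  have h3 : 0 ≤ ⟪starOp ρ (insert x R) x w, starOp ρ (insert x R) x w⟫ := real_inner_self_nonneg
  rw [← h2] at h3
  have h4 : (0:ℝ) < (insert x R).card := by
    exact_mod_cast Finset.card_pos.2 ⟨x, Finset.mem_insert_self x R⟩
  simp only [conj_trivial] at h3
  exact nonneg_of_mul_nonneg_right h3 h4

/-- Top eigenvector on an invariant subspace. -/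
lemma exists_top (X : E →ₗ[ℝ] E) (hX : X.IsSymmetric) (W : Submodule ℝ E)
    (hW : ∀ v ∈ W, X v ∈ W) (hne : W ≠ ⊥) :
    ∃ v ∈ W, v ≠ 0 ∧ ∃ μ : ℝ, X v = μ • v ∧ ∀ u ∈ W, ⟪X u, u⟫ ≤ μ * ⟪u, u⟫ := by
  haveI : Nontrivial W := Submodule.nontrivial_iff_ne_bot.2 hne
  have hs : (X.restrict hW).IsSymmetric := hX.restrict_invariant hW
  have h := hs.hasEigenvalue_iSup_of_finiteDimensional
  obtain ⟨v, hv⟩ := h.exists_hasEigenvector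
  refine ⟨v, v.2, fun h0 => hv.2 (Subtype.ext h0), _, congrArg Subtype.val hv.apply_eq_smul, ?_⟩
  intro u hu
  by_cases hu0 : u = 0
  · simp [hu0]
  have hpos : 0 < ⟪u, u⟫ := real_inner_self_pos.2 hu0
  have hbd : BddAbove (Set.range fun x : { x : W // x ≠ 0 } =>
      RCLike.re ⟪X.restrict hW x, (x : W)⟫ / ‖(x : W)‖ ^ 2) := by
    let Y := LinearMap.toContinuousLinearMap (X.restrict hW)
    refine ⟨‖Y‖, ?_⟩
    rintro _ ⟨x, rfl⟩
    have hx : 0 < ‖(x : W)‖ := norm_pos_iff.2 x.2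
    show _ / _ ≤ _
    rw [div_le_iff₀ (by positivity)]
    calc RCLike.re ⟪X.restrict hW x, (x : W)⟫ ≤ ‖Y x‖ * ‖(x:W)‖ := real_inner_le_norm (Y x) (x : W)
      _ ≤ ‖Y‖ * ‖(x:W)‖ * ‖(x:W)‖ := by gcongr; exact Y.le_opNorm _
      _ = _ := by ring
  have := le_ciSup hbd ⟨⟨u, hu⟩, fun h => hu0 (congrArg Subtype.val h)⟩
  have h2 : ⟪X u, u⟫ / ‖u‖ ^ 2 ≤ _ := this
  rw [← real_inner_self_eq_norm_sq, div_le_iff₀ hpos] at h2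
  exact h2

end Abstract

set_option linter.unusedSectionVars false
section Abstract2
open Equiv
open scoped RealInnerProductSpace

variable {α : Type*} [Fintype α] [DecidableEq α]
variable {E : Type*} [NormedAddCommGroup E] [InnerProductSpace ℝ E] [FiniteDimensional ℝ E]
variable {ρ : Perm α →* (E →ₗ[ℝ] E)}

lemma rho_refl (ρ : Perm α →* (E →ₗ[ℝ] E)) (w : E) : ρ (Equiv.refl α) w = w := by
  have : (Equiv.refl α) = (1 : Perm α) := rfl
  rw [this]; simp

lemma exists_max (ρ : Perm α →* (E →ₗ[ℝ] E)) (F : Submodule ℝ E) (hF : F ≠ ⊥) (D : Finset α) :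
    ∃ R ⊆ D, (∃ w ∈ F, w ≠ 0 ∧ Fxd ρ R w) ∧
      ∀ R' ⊆ D, R.card < R'.card → ∀ w ∈ F, Fxd ρ R' w → w = 0 := by
  classical
  obtain ⟨v, hv, hv0⟩ := Submodule.exists_mem_ne_zero_of_ne_bot hF
  let P := D.powerset.filter (fun R => ∃ w ∈ F, w ≠ 0 ∧ Fxd ρ R w)
  have hP : P.Nonempty := by
    refine ⟨∅, ?_⟩
    simp only [P, Finset.mem_filter, Finset.mem_powerset, Finset.empty_subset, true_and]
    refine ⟨v, hv, hv0, ?_⟩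
    intro g hg
    have : g = 1 := Equiv.ext fun y => hg y (by simp)
    rw [this]; simp
  obtain ⟨R, hR, hmax⟩ := Finset.exists_max_image P Finset.card hP
  simp only [P, Finset.mem_filter, Finset.mem_powerset] at hR hmax
  refine ⟨R, hR.1, hR.2, fun R' hR' hc w hw hf => ?_⟩
  by_contra h0
  have := hmax R' ⟨hR', w, hw, h0, hf⟩
  omega

/-- eigen-part of an invariant subspace -/
def eigPart (X : E →ₗ[ℝ] E) (μ : ℝ) (W : Submodule ℝ E) : Submodule ℝ E :=
  W ⊓ LinearMap.ker (X - μ • LinearMap.id)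

lemma mem_eigPart {X : E →ₗ[ℝ] E} {μ : ℝ} {W : Submodule ℝ E} {v : E} :
    v ∈ eigPart X μ W ↔ v ∈ W ∧ X v = μ • v := by
  simp [eigPart, sub_eq_zero]

lemma star_mem {W : Submodule ℝ E} {S : Finset α} {x : α} (hW : ∀ g, Off S g → ∀ v ∈ W, ρ g v ∈ W)
    {R : Finset α} (hR : R ⊆ S) (hx : x ∈ S) {v : E} (hv : v ∈ W) : starOp ρ R x v ∈ W := by
  rw [starOp_apply]
  exact W.sum_mem fun m hm => hW _ (off_swap hx (hR hm)) v hv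

lemma star_split {R S : Finset α} {x : α} (hx : x ∈ S) (hR : R ⊆ S.erase x) (v : E) :
    starOp ρ S x v = starOp ρ (insert x R) x v + ∑ z ∈ (S.erase x) \ R, ρ (swap x z) v := by
  rw [starOp_apply, starOp_apply]
  have : S = insert x R ∪ ((S.erase x) \ R) := by
    ext y
    simp only [Finset.mem_union, Finset.mem_insert, Finset.mem_sdiff, Finset.mem_erase]
    constructor
    · intro hy; by_cases h : y = x <;> by_cases h' : y ∈ R <;> simp [*]
    · rintro ((rfl | h) | h)
      · exact hx
      · exact (Finset.mem_erase.1 (hR h)).2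
      · exact h.1.2
  conv_lhs => rw [this]
  rw [Finset.sum_union]
  rw [Finset.disjoint_left]
  intro y hy hy'
  simp only [Finset.mem_insert, Finset.mem_sdiff, Finset.mem_erase] at hy hy'
  tauto

/-- On a module without nonzero vectors fixed by more than `r` letters, stars are at most `r`. -/
lemma star_le (hρ : ∀ g v w, ⟪ρ g v, ρ g w⟫ = ⟪v, w⟫) (r : ℕ) (W : Submodule ℝ E) :
    ∀ (s : ℕ) (S : Finset α), S.card = s → ∀ x ∈ S,
    (∀ g, Off S g → ∀ v ∈ W, ρ g v ∈ W) →
    (∀ R ⊆ S, r < R.card → ∀ w ∈ W, Fxd ρ R w → w = 0) →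
    ∀ v ∈ W, ⟪starOp ρ S x v, v⟫ ≤ r * ⟪v, v⟫ := by
  intro s
  induction s using Nat.strong_induction_on with
  | _ s ih =>
  intro S hS x hx hW hr v hv
  by_cases hbot : W = ⊥
  · rw [hbot, Submodule.mem_bot] at hv
    simp [hv]
  obtain ⟨v0, hv0, hv0ne, μ, hμ, htop⟩ := exists_top (starOp ρ S x) (starOp_symm hρ S x) W
    (fun v hv => star_mem hW (Finset.Subset.refl S) hx hv) hbot
  refine (htop v hv).trans (mul_le_mul_of_nonneg_right ?_ real_inner_self_nonneg)
  set F := eigPart (starOp ρ S x) μ W with hF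
  have hFne : F ≠ ⊥ := by
    intro h
    have : v0 ∈ F := mem_eigPart.2 ⟨hv0, hμ⟩
    rw [h, Submodule.mem_bot] at this
    exact hv0ne this
  have hFinv : ∀ g, Off (S.erase x) g → ∀ v ∈ F, ρ g v ∈ F := by
    intro g hg v hv
    obtain ⟨h1, h2⟩ := mem_eigPart.1 hv
    have hg' : Off S g := hg.mono (Finset.erase_subset x S)
    refine mem_eigPart.2 ⟨hW g hg' v h1, ?_⟩
    rw [← starOp_comm ρ hg' (hg x (by simp)) v, h2, map_smul]
  obtain ⟨R, hR, ⟨w, hw, hw0, hfix⟩, hmax⟩ := exists_max ρ F hFne (S.erase x)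
  obtain ⟨hwW, hweq⟩ := mem_eigPart.1 hw
  have hxR : x ∉ R := fun h => (Finset.mem_erase.1 (hR h)).1 rfl
  have hRS : R ⊆ S := hR.trans (Finset.erase_subset x S)
  have hinsS : insert x R ⊆ S := Finset.insert_subset hx hRS
  -- maximality
  have hz : ∀ z ∈ (S.erase x) \ R, starOp ρ (insert z R) z w = 0 := by
    intro z hz
    rw [Finset.mem_sdiff] at hz
    have hsub : insert z R ⊆ S.erase x := Finset.insert_subset hz.1 hR
    refine hmax (insert z R) hsub ?_ _ (star_mem hFinv hsub hz.1 hw) (fxd_star hz.2 hfix)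
    rw [Finset.card_insert_of_notMem hz.2]; omega
  by_cases hE : starOp ρ (insert x R) x w = 0
  · have hRne : R.Nonempty := by
      by_contra hn
      rw [Finset.not_nonempty_iff_eq_empty] at hn
      subst hn
      apply hw0
      simpa [starOp_apply, rho_refl] using hE
    have hlt : (S \ R).card < s := by
      rw [← hS]
      apply Finset.card_lt_card
      exact Finset.sdiff_ssubset hRS hRne
    have hsub : S \ R ⊆ S := Finset.sdiff_subset
    have hxm : x ∈ S \ R := Finset.mem_sdiff.2 ⟨hx, hxR⟩
    have := ih _ hlt (S \ R) rfl x hxm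
      (fun g hg => hW g (hg.mono hsub)) (fun R' hR' => hr R' (hR'.trans hsub)) w hwW
    have e1 := star_split (ρ := ρ) hx hR w
    have e2 := star_split (ρ := ρ) (R := ∅) hxm (by simp) w
    have e3 : ((S \ R).erase x) \ ∅ = (S.erase x) \ R := by
      ext y; simp only [Finset.mem_sdiff, Finset.mem_erase, Finset.notMem_empty]; tauto
    rw [hE, zero_add] at e1
    rw [e3, ← e1, hweq] at e2
    rw [e2] at this
    simp only [starOp_apply, insert_empty_eq, Finset.sum_singleton, swap_self,
      inner_add_left, inner_smul_left, conj_trivial] at this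
    rw [rho_refl] at this
    have hpos : 0 < ⟪w, w⟫ := real_inner_self_pos.2 hw0
    by_contra hcon
    push Not at hcon
    nlinarith
  · have hfx := fxd_star hxR hfix
    have hcard : (insert x R).card ≤ r := by
      by_contra hcon
      push Not at hcon
      exact hE (hr _ hinsS hcon _ (star_mem hW hinsS hx hwW) hfx)
    have e1 := star_split (ρ := ρ) hx hR w
    have e2 := congrArg (starOp ρ (insert x R) x) e1
    rw [map_add, map_sum, hweq, map_smul, star_fxd (Finset.mem_insert_self x R) hfx] at e2
    have e3 : ∑ z ∈ (S.erase x) \ R, starOp ρ (insert x R) x (ρ (swap x z) w) = 0 := by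
      refine Finset.sum_eq_zero fun z hzm => ?_
      have hz1 := hz z hzm
      rw [Finset.mem_sdiff, Finset.mem_erase] at hzm
      have hcal : starOp ρ (insert x R) x (ρ (swap x z) w)
          = ρ (swap x z) (starOp ρ (insert z R) z w) := by
        rw [starOp_apply, starOp_apply, map_sum, Finset.sum_insert hxR, Finset.sum_insert hzm.2]
        congr 1
        · rw [swap_self, swap_self, rho_refl, rho_refl]
        · refine Finset.sum_congr rfl fun m hm => ?_
          have hmx : m ≠ x := fun h => hxR (h ▸ hm)
          have hmz : m ≠ z := fun h => hzm.2 (h ▸ hm)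
          rw [conj_apply ρ (swap x z) z m w, swap_apply_right, swap_apply_of_ne_of_ne hmx hmz]
      rw [hcal, hz1, map_zero]
    rw [e3, add_zero] at e2
    have hμ' : μ = ((insert x R).card : ℝ) := by
      exact smul_left_injective ℝ hE e2
    rw [hμ']
    exact_mod_cast hcard

end Abstract2

set_option linter.unusedSectionVars false
section Abstract3
open Equiv
open scoped RealInnerProductSpace

variable {α : Type*} [Fintype α] [DecidableEq α]
variable {E : Type*} [NormedAddCommGroup E] [InnerProductSpace ℝ E] [FiniteDimensional ℝ E]
variable {ρ : Perm α →* (E →ₗ[ℝ] E)}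

lemma inner_fullOp (S : Finset α) (w : E) :
    ⟪fullOp ρ S w, w⟫ = ∑ x ∈ S, ∑ y ∈ S, ⟪ρ (swap x y) w, w⟫ := by
  simp_rw [fullOp_apply, sum_inner]

lemma inner_starOp (S : Finset α) (x : α) (w : E) :
    ⟪starOp ρ S x w, w⟫ = ∑ y ∈ S, ⟪ρ (swap x y) w, w⟫ := by
  simp_rw [starOp_apply, sum_inner]

lemma sum_union_sq {R D : Finset α} (hd : Disjoint R D) (f : α → α → ℝ) (hf : ∀ x y, f x y = f y x) :
    ∑ x ∈ R ∪ D, ∑ y ∈ R ∪ D, f x y =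
      ∑ x ∈ R, ∑ y ∈ R, f x y + 2 * ∑ x ∈ D, ∑ y ∈ R, f x y + ∑ x ∈ D, ∑ y ∈ D, f x y := by
  rw [Finset.sum_union hd]
  simp_rw [Finset.sum_union hd, Finset.sum_add_distrib]
  have : ∑ x ∈ R, ∑ y ∈ D, f x y = ∑ x ∈ D, ∑ y ∈ R, f x y := by
    rw [Finset.sum_comm]
    exact Finset.sum_congr rfl fun x _ => Finset.sum_congr rfl fun y _ => hf _ _
  rw [this]; ring

lemma full_split {R S : Finset α} (hR : R ⊆ S) {w : E} (hw : Fxd ρ R w) :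
    ⟪fullOp ρ S w, w⟫ = (R.card : ℝ) ^ 2 * ⟪w, w⟫
      + 2 * ∑ z ∈ S \ R, (⟪starOp ρ (insert z R) z w, w⟫ - ⟪w, w⟫)
      + ⟪fullOp ρ (S \ R) w, w⟫ := by
  rw [inner_fullOp, inner_fullOp]
  conv_lhs => rw [← Finset.union_sdiff_of_subset hR]
  rw [sum_union_sq Finset.disjoint_sdiff _ (fun x y => by rw [swap_comm])]
  congr 2
  · rw [Finset.sum_congr rfl (fun x hx => Finset.sum_congr rfl
      (fun y hy => by rw [hw _ (off_swap hx hy)]))]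
    simp; ring
  · congr 1
    refine Finset.sum_congr rfl fun z hz => ?_
    rw [Finset.mem_sdiff] at hz
    rw [inner_starOp, Finset.sum_insert hz.2, swap_self, rho_refl]
    ring

lemma full_le (hρ : ∀ g v w, ⟪ρ g v, ρ g w⟫ = ⟪v, w⟫) (D : Finset α) (w : E) :
    ⟪fullOp ρ D w, w⟫ ≤ (D.card : ℝ) ^ 2 * ⟪w, w⟫ := by
  rw [inner_fullOp]
  refine (Finset.sum_le_sum fun x _ => Finset.sum_le_sum fun y _ => inner_rho_le hρ _ w).trans ?_
  simp
  apply le_of_eq; ring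

lemma le_full (hρ : ∀ g v w, ⟪ρ g v, ρ g w⟫ = ⟪v, w⟫) (D : Finset α) (w : E) :
    (2 * (D.card : ℝ) - (D.card : ℝ) ^ 2) * ⟪w, w⟫ ≤ ⟪fullOp ρ D w, w⟫ := by
  rw [inner_fullOp]
  have h : ∀ x ∈ D, ∀ y ∈ D, (if x = y then 2 * ⟪w, w⟫ else 0) - ⟪w, w⟫ ≤ ⟪ρ (swap x y) w, w⟫ := by
    intro x _ y _
    split_ifs with hxy
    · subst hxy; rw [swap_self, rho_refl]; apply le_of_eq; ring
    · have := neg_le_inner_rho hρ (swap x y) w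
      linarith
  refine le_trans ?_ (Finset.sum_le_sum fun x hx => Finset.sum_le_sum fun y hy => h x hx y hy)
  simp only [Finset.sum_sub_distrib, Finset.sum_ite_eq]
  simp
  apply le_of_eq; ring

lemma le_full_fxd (hρ : ∀ g v w, ⟪ρ g v, ρ g w⟫ = ⟪v, w⟫) {R S : Finset α} (hR : R ⊆ S) {w : E}
    (hw : Fxd ρ R w) :
    (S.card : ℝ) * (2 * R.card - S.card) * ⟪w, w⟫ ≤ ⟪fullOp ρ S w, w⟫ := by
  rw [full_split hR hw]
  have h1 := le_full hρ (S \ R) w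
  have h2 : ∑ z ∈ S \ R, (0 - ⟪w, w⟫) ≤ ∑ z ∈ S \ R, (⟪starOp ρ (insert z R) z w, w⟫ - ⟪w, w⟫) := by
    refine Finset.sum_le_sum fun z hz => ?_
    have := star_nonneg hρ (Finset.mem_sdiff.1 hz).2 hw
    linarith
  have h3 : ((S \ R).card : ℝ) = S.card - R.card := by
    rw [Finset.card_sdiff_of_subset hR, Nat.cast_sub (Finset.card_le_card hR)]
  simp only [zero_sub, Finset.sum_const, nsmul_eq_mul] at h2
  rw [h3] at h1 h2
  nlinarith

lemma full_mem {W : Submodule ℝ E} {S : Finset α} (hW : ∀ g, Off S g → ∀ v ∈ W, ρ g v ∈ W)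
    {v : E} (hv : v ∈ W) : fullOp ρ S v ∈ W := by
  rw [fullOp_apply]
  exact W.sum_mem fun x hx => W.sum_mem fun m hm => hW _ (off_swap hx hm) v hv

/-- Octopus inequality with equal weights. -/
lemma octopus (hρ : ∀ g v w, ⟪ρ g v, ρ g w⟫ = ⟪v, w⟫) {S : Finset α} {x : α} (hx : x ∈ S) (v : E) :
    2 * S.card * ⟪starOp ρ S x v, v⟫ - ⟪fullOp ρ S v, v⟫ ≤ (S.card : ℝ) ^ 2 * ⟪v, v⟫ := by
  by_cases hE : (⊤ : Submodule ℝ E) = ⊥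
  · have : v ∈ (⊤ : Submodule ℝ E) := trivial
    rw [hE, Submodule.mem_bot] at this
    simp [this]
  set s : ℝ := (S.card : ℝ) with hs
  let X : E →ₗ[ℝ] E := (2 * s) • starOp ρ S x - fullOp ρ S
  have hXa : ∀ u, X u = (2 * s) • starOp ρ S x u - fullOp ρ S u := fun u => rfl
  have hX : X.IsSymmetric := by
    intro u w
    have h1 := starOp_symm hρ S x u w
    have h2 := fullOp_symm hρ S u w
    simp only [hXa, inner_sub_left, inner_sub_right, inner_smul_left, inner_smul_right,
      conj_trivial] 
    rw [h1, h2]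
  have hcomm : ∀ u, starOp ρ S x (fullOp ρ S u) = fullOp ρ S (starOp ρ S x u) := by
    intro u
    rw [starOp_apply, starOp_apply, map_sum]
    exact Finset.sum_congr rfl fun m hm => fullOp_comm ρ (off_swap hx hm) u
  obtain ⟨v0, -, hv0, ξ, hξ, htop⟩ := exists_top X hX ⊤ (fun _ _ => trivial) hE
  have h := htop v trivial
  rw [hXa, inner_sub_left, inner_smul_left, conj_trivial] at h
  refine h.trans (mul_le_mul_of_nonneg_right ?_ real_inner_self_nonneg)
  -- joint eigenvector
  let F := eigPart X ξ ⊤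
  have hF : F ≠ ⊥ := by
    intro h
    have : v0 ∈ F := mem_eigPart.2 ⟨trivial, hξ⟩
    rw [h, Submodule.mem_bot] at this
    exact hv0 this
  have hFinv : ∀ u ∈ F, fullOp ρ S u ∈ F := by
    intro u hu
    obtain ⟨-, hu⟩ := mem_eigPart.1 hu
    refine mem_eigPart.2 ⟨trivial, ?_⟩
    rw [← map_smul, ← hu, hXa, hXa, map_sub, map_smul, hcomm]
  obtain ⟨v1, hv1F, hv1, τ, hτ, -⟩ := exists_top (fullOp ρ S) (fullOp_symm hρ S) F hFinv hF
  obtain ⟨-, hv1X⟩ := mem_eigPart.1 hv1F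
  let G := eigPart (fullOp ρ S) τ ⊤
  have hv1G : v1 ∈ G := mem_eigPart.2 ⟨trivial, hτ⟩
  have hG : G ≠ ⊥ := by
    intro h
    rw [h, Submodule.mem_bot] at hv1G
    exact hv1 hv1G
  have hGinv : ∀ g, Off S g → ∀ v ∈ G, ρ g v ∈ G := by
    intro g hg u hu
    obtain ⟨-, hu⟩ := mem_eigPart.1 hu
    refine mem_eigPart.2 ⟨trivial, ?_⟩
    rw [← fullOp_comm ρ hg, hu, map_smul]
  obtain ⟨R, hR, ⟨w, hwG, hw0, hwf⟩, hmax⟩ := exists_max ρ G hG S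
  have hJ := star_le hρ R.card G S.card S rfl x hx hGinv hmax v1 hv1G
  have hT := le_full_fxd hρ hR hwf
  rw [(mem_eigPart.1 hwG).2, inner_smul_left, conj_trivial] at hT
  have hτ' := le_of_mul_le_mul_right hT (real_inner_self_pos.2 hw0)
  have hpos : 0 < ⟪v1, v1⟫ := real_inner_self_pos.2 hv1
  have hv : ⟪X v1, v1⟫ = ξ * ⟪v1, v1⟫ := by rw [hv1X, inner_smul_left, conj_trivial]
  rw [hXa, inner_sub_left, inner_smul_left, conj_trivial, hτ, inner_smul_left, conj_trivial] at hv
  have hs0 : 0 ≤ s := by positivity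
  refine le_of_mul_le_mul_right ?_ hpos
  rw [← hv]
  have h5 := mul_le_mul_of_nonneg_left hJ hs0
  have h6 := mul_le_mul_of_nonneg_right hτ' hpos.le
  rw [← hs] at h6
  nlinarith

/-- first upper bound on the complete sum -/
lemma full_le1 (hρ : ∀ g v w, ⟪ρ g v, ρ g w⟫ = ⟪v, w⟫) (r : ℕ) (W : Submodule ℝ E) (S : Finset α)
    (hW : ∀ g, Off S g → ∀ v ∈ W, ρ g v ∈ W)
    (hr : ∀ R ⊆ S, r < R.card → ∀ w ∈ W, Fxd ρ R w → w = 0) (v : E) (hv : v ∈ W) :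
    ⟪fullOp ρ S v, v⟫ ≤ S.card * r * ⟪v, v⟫ := by
  have : ⟪fullOp ρ S v, v⟫ = ∑ x ∈ S, ⟪starOp ρ S x v, v⟫ := by
    rw [inner_fullOp]; simp_rw [inner_starOp]
  rw [this]
  refine (Finset.sum_le_sum fun x hx => star_le hρ r W S.card S rfl x hx hW hr v hv).trans ?_
  simp; apply le_of_eq; ring

/-- second upper bound on the complete sum -/
lemma full_le2 (hρ : ∀ g v w, ⟪ρ g v, ρ g w⟫ = ⟪v, w⟫) (n k : ℕ) (hk : k ≤ n) (W : Submodule ℝ E)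
    (S : Finset α) (hS : S.card = 2 * n)
    (hW : ∀ g, Off S g → ∀ v ∈ W, ρ g v ∈ W)
    (hr : ∀ R ⊆ S, 2 * n - k < R.card → ∀ w ∈ W, Fxd ρ R w → w = 0) (v : E) (hv : v ∈ W) :
    ⟪fullOp ρ S v, v⟫ ≤ ((2 * n : ℝ) ^ 2 - 2 * k * (2 * n - k + 1)) * ⟪v, v⟫ := by
  by_cases hbot : W = ⊥
  · rw [hbot, Submodule.mem_bot] at hv
    simp [hv]
  obtain ⟨v0, hv0, hv0ne, μ, hμ, htop⟩ := exists_top (fullOp ρ S) (fullOp_symm hρ S) W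
    (fun v hv => full_mem hW hv) hbot
  refine (htop v hv).trans (mul_le_mul_of_nonneg_right ?_ real_inner_self_nonneg)
  set F := eigPart (fullOp ρ S) μ W with hF
  have hv0F : v0 ∈ F := mem_eigPart.2 ⟨hv0, hμ⟩
  have hFne : F ≠ ⊥ := by
    intro h
    rw [h, Submodule.mem_bot] at hv0F
    exact hv0ne hv0F
  have hFinv : ∀ g, Off S g → ∀ v ∈ F, ρ g v ∈ F := by
    intro g hg v hv
    obtain ⟨h1, h2⟩ := mem_eigPart.1 hv
    refine mem_eigPart.2 ⟨hW g hg v h1, ?_⟩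
    rw [← fullOp_comm ρ hg v, h2, map_smul]
  obtain ⟨R, hR, ⟨w, hw, hw0, hfix⟩, hmax⟩ := exists_max ρ F hFne S
  obtain ⟨hwW, hweq⟩ := mem_eigPart.1 hw
  have hpos : 0 < ⟪w, w⟫ := real_inner_self_pos.2 hw0
  have hrr : R.card ≤ 2 * n - k := by
    by_contra hcon
    push Not at hcon
    exact hw0 (hr R hR hcon w hwW hfix)
  have hz : ∀ z ∈ S \ R, starOp ρ (insert z R) z w = 0 := by
    intro z hz
    rw [Finset.mem_sdiff] at hz
    have hsub : insert z R ⊆ S := Finset.insert_subset hz.1 hR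
    refine hmax (insert z R) hsub ?_ _ (star_mem hFinv hsub hz.1 hw) (fxd_star hz.2 hfix)
    rw [Finset.card_insert_of_notMem hz.2]; omega
  have h1 := full_le1 hρ R.card F S hFinv hmax w hw
  have h2 := full_split hR hfix
  have h3 := full_le hρ (S \ R) w
  rw [Finset.sum_congr rfl (fun z hzm => by rw [hz z hzm])] at h2
  have h4 : ((S \ R).card : ℝ) = S.card - R.card := by
    rw [Finset.card_sdiff_of_subset hR, Nat.cast_sub (Finset.card_le_card hR)]
  simp only [inner_zero_left, zero_sub, Finset.sum_const, nsmul_eq_mul] at h2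
  rw [h4] at h2 h3
  rw [hweq, inner_smul_left, conj_trivial] at h1 h2
  have h5 : μ ≤ S.card * R.card := le_of_mul_le_mul_right h1 hpos
  have h6 : μ ≤ (R.card : ℝ)^2 - 2 * (S.card - R.card) + (S.card - R.card)^2 := by
    refine le_of_mul_le_mul_right ?_ hpos
    rw [h2]; linarith
  rw [hS] at h5 h6
  push_cast at h5 h6
  obtain ⟨j, hj⟩ : ∃ j : ℕ, R.card + j = 2 * n :=
    ⟨2 * n - R.card, by omega⟩
  have hjr : (R.card : ℝ) = 2 * n - j := by
    have : (R.card : ℝ) + j = 2 * n := by exact_mod_cast hj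
    linarith
  have hkj : k ≤ j := by omega
  have hkj' : (k : ℝ) ≤ j := by exact_mod_cast hkj
  have hk' : (k : ℝ) ≤ n := by exact_mod_cast hk
  rw [hjr] at h5 h6
  by_cases hjn : j ≤ n
  · have hjn' : (j : ℝ) ≤ n := by exact_mod_cast hjn
    nlinarith
  · have hjn' : (n : ℝ) + 1 ≤ j := by exact_mod_cast (by omega : n + 1 ≤ j)
    have : (0:ℝ) ≤ n := by positivity
    nlinarith

/-- Comparison of the biased sum with the unbiased one. -/
lemma bias_le (hρ : ∀ g v w, ⟪ρ g v, ρ g w⟫ = ⟪v, w⟫) (a b : ℝ) (hb : 0 < b) (hba : b ≤ a)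
    (hab : a + b = 2) (n : ℕ) (A : Finset α) (hA : A.card = n) (hB : Aᶜ.card = n) (v : E) :
    ∑ x, ∑ y, (if x ∈ A then a else b) * (if y ∈ A then a else b) * ⟪ρ (swap x y) v, v⟫ ≤
      b * ⟪fullOp ρ Finset.univ v, v⟫ + (1 - b) * (2 * n) ^ 2 * ⟪v, v⟫ := by
  set f : α → α → ℝ := fun x y => ⟪ρ (swap x y) v, v⟫ with hf
  have hfs : ∀ x y, f x y = f y x := fun x y => by simp only [hf]; rw [swap_comm]
  have hu : (Finset.univ : Finset α) = A ∪ Aᶜ := (Finset.union_compl A).symm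
  have hd : Disjoint A Aᶜ := disjoint_compl_right
  have e1 : ∑ x, ∑ y, (if x ∈ A then a else b) * (if y ∈ A then a else b) * f x y =
      a ^ 2 * ∑ x ∈ A, ∑ y ∈ A, f x y + 2 * (a * b * ∑ x ∈ Aᶜ, ∑ y ∈ A, f x y)
       + b ^ 2 * ∑ x ∈ Aᶜ, ∑ y ∈ Aᶜ, f x y := by
    rw [hu, sum_union_sq hd _ (fun x y => by rw [hfs x y]; ring)]
    simp_rw [Finset.mul_sum]
    refine congrArg₂ (· + ·) (congrArg₂ (· + ·) ?_ ?_) ?_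
    · refine Finset.sum_congr rfl fun x hx => Finset.sum_congr rfl fun y hy => ?_
      simp only [hx, hy, if_true]; ring
    · refine Finset.sum_congr rfl fun x hx => Finset.sum_congr rfl fun y hy => ?_
      have hx' := Finset.mem_compl.1 hx
      simp only [hx', hy, if_true, if_false]; ring
    · refine Finset.sum_congr rfl fun x hx => ?_
      refine Finset.sum_congr rfl fun y hy => ?_
      have hx' := Finset.mem_compl.1 hx
      have hy' := Finset.mem_compl.1 hy
      simp only [hx', hy', if_false]; ring
  have e2 : ⟪fullOp ρ Finset.univ v, v⟫ =
      ∑ x ∈ A, ∑ y ∈ A, f x y + 2 * ∑ x ∈ Aᶜ, ∑ y ∈ A, f x y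
       + ∑ x ∈ Aᶜ, ∑ y ∈ Aᶜ, f x y := by
    rw [inner_fullOp, hu, sum_union_sq hd _ hfs]
  have e3 : ∑ x ∈ A, ∑ y ∈ A, f x y ≤ (n : ℝ) ^ 2 * ⟪v, v⟫ := by
    have := full_le hρ A v
    rwa [inner_fullOp, hA] at this
  have e4 : ∀ x ∈ A, 2 * n * ∑ y ∈ Aᶜ, f x y - ∑ x ∈ Aᶜ, ∑ y ∈ Aᶜ, f x y ≤ (n : ℝ) ^ 2 * ⟪v, v⟫ := by
    intro x hx
    have hxA : x ∉ Aᶜ := by simpa using hx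
    have := octopus hρ (Finset.mem_insert_self x Aᶜ) v
    rw [Finset.card_insert_of_notMem hxA, inner_starOp, inner_fullOp, Finset.sum_insert hxA,
      Finset.insert_eq, sum_union_sq (by simpa using hx) _ hfs, hB, swap_self, rho_refl] at this
    simp only [Finset.sum_singleton] at this
    have h2 : ∑ y ∈ Aᶜ, f y x = ∑ y ∈ Aᶜ, f x y := Finset.sum_congr rfl fun y _ => hfs _ _
    have h3 : f x x = ⟪v, v⟫ := by simp only [hf]; rw [swap_self, rho_refl]
    rw [h2, h3] at this
    push_cast at this
    have h4 : ∑ y ∈ Aᶜ, ⟪ρ (swap x y) v, v⟫ = ∑ y ∈ Aᶜ, f x y := rfl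
    rw [h4] at this
    nlinarith
  have e5 : 2 * ∑ x ∈ Aᶜ, ∑ y ∈ A, f x y - ∑ x ∈ Aᶜ, ∑ y ∈ Aᶜ, f x y ≤ (n : ℝ) ^ 2 * ⟪v, v⟫ := by
    rcases Nat.eq_zero_or_pos n with h0 | hn
    · subst h0
      have hA' := Finset.card_eq_zero.1 hA
      have hB' := Finset.card_eq_zero.1 hB
      rw [hB']; simp
    have hs := Finset.sum_le_sum e4
    simp only [Finset.sum_sub_distrib, Finset.sum_const, nsmul_eq_mul, hA, ← Finset.mul_sum] at hs
    have hc : ∑ x ∈ A, ∑ y ∈ Aᶜ, f x y = ∑ x ∈ Aᶜ, ∑ y ∈ A, f x y := by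
      rw [Finset.sum_comm]
      exact Finset.sum_congr rfl fun x _ => Finset.sum_congr rfl fun y _ => hfs _ _
    rw [hc] at hs
    have hn' : (0:ℝ) < n := by exact_mod_cast hn
    refine le_of_mul_le_mul_left ?_ hn'
    linarith
  rw [e1, e2]
  set TA := ∑ x ∈ A, ∑ y ∈ A, f x y
  set TB := ∑ x ∈ Aᶜ, ∑ y ∈ Aᶜ, f x y
  set C := ∑ x ∈ Aᶜ, ∑ y ∈ A, f x y
  have ha : a = 2 - b := by linarith
  subst ha
  have hb1 : b ≤ 1 := by linarith
  have m1 := mul_le_mul_of_nonneg_left e3 (by nlinarith : 0 ≤ (2 - b)^2 - b)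
  have m2 := mul_le_mul_of_nonneg_left e5 (by nlinarith : 0 ≤ b * (1 - b))
  linarith

end Abstract3

set_option linter.unusedSectionVars false
section Count
open scoped RealInnerProductSpace
variable {E : Type*} [NormedAddCommGroup E] [InnerProductSpace ℝ E] [FiniteDimensional ℝ E]

lemma count_le {ι : Type*} [Fintype ι] (X : E →ₗ[ℝ] E) (u : OrthonormalBasis ι ℝ E) (e : ι → ℝ)
    (hu : ∀ i, X (u i) = e i • u i) (M : Submodule ℝ E) (β : ℝ)
    (hM : ∀ v ∈ Mᗮ, ⟪X v, v⟫ ≤ β * ⟪v, v⟫) :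
    (Finset.univ.filter (fun i => β < e i)).card ≤ Module.finrank ℝ M := by
  classical
  set I := Finset.univ.filter (fun i => β < e i) with hI
  let Φ : (I → ℝ) →ₗ[ℝ] E := Fintype.linearCombination ℝ (fun i : I => u i)
  have hΦ : ∀ c, Φ c = ∑ i, c i • u i := fun c => by
    simp [Φ, Fintype.linearCombination_apply]
  have hon : Orthonormal ℝ (fun i : I => u i) := u.orthonormal.comp _ Subtype.val_injective
  let Ψ : (I → ℝ) →ₗ[ℝ] M := (M.orthogonalProjection : E →L[ℝ] M).toLinearMap ∘ₗ Φ
  have hinj : Function.Injective Ψ := by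
    rw [injective_iff_map_eq_zero]
    intro c hc
    have hmem : Φ c ∈ Mᗮ := by
      rw [← Submodule.ker_orthogonalProjection]
      exact hc
    have h := hM _ hmem
    have hX : X (Φ c) = ∑ i, (c i * e i) • u i := by
      rw [hΦ, map_sum]
      refine Finset.sum_congr rfl fun i _ => ?_
      rw [map_smul, hu, smul_smul]
    rw [hX, hΦ, hon.inner_sum, hon.inner_sum, Finset.mul_sum] at h
    simp only [conj_trivial] at h
    have h0 : ∑ i : I, (e i - β) * c i ^ 2 ≤ 0 := by
      have : ∑ i : I, (e i - β) * c i ^ 2 = ∑ i : I, (c i * e i * c i) - ∑ i : I, β * (c i * c i) := by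
        rw [← Finset.sum_sub_distrib]
        exact Finset.sum_congr rfl fun i _ => by ring
      rw [this]; linarith
    have hnn : ∀ i ∈ (Finset.univ : Finset I), 0 ≤ (e i - β) * c i ^ 2 := by
      intro i _
      have : β < e i := (Finset.mem_filter.1 i.2).2
      exact mul_nonneg (by linarith) (sq_nonneg _)
    have h1 := (Finset.sum_eq_zero_iff_of_nonneg hnn).1 (le_antisymm h0 (Finset.sum_nonneg hnn))
    funext i
    have hi := h1 i (Finset.mem_univ i)
    have : β < e i := (Finset.mem_filter.1 i.2).2
    rcases mul_eq_zero.1 hi with h2 | h2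
    · linarith
    · exact pow_eq_zero_iff (two_ne_zero) |>.1 h2
  have := LinearMap.finrank_le_finrank_of_injective hinj
  simpa using this

lemma layer {ι : Type*} [Fintype ι] (e : ι → ℝ) (N m : ℕ) (β : ℕ → ℝ) (D : ℕ → ℕ)
    (hβ : ∀ k, 0 ≤ β k) (h0 : ∀ i, e i ≤ β 0)
    (hD : ∀ k < N, (Finset.univ.filter (fun i => β (k + 1) < e i)).card ≤ D k)
    (hDN : Fintype.card ι ≤ D N) :
    ∑ i ∈ Finset.univ.filter (fun i => 0 < e i), e i ^ m ≤
      ∑ k ∈ Finset.range (N + 1), D k * β k ^ m := by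
  classical
  have hex : ∀ i, ∃ k ≤ N, e i ≤ β k ∧ (k < N → β (k + 1) < e i) := by
    intro i
    let K := (Finset.range (N + 1)).filter (fun k => e i ≤ β k)
    have hK : K.Nonempty := ⟨0, by simp [K, h0 i]⟩
    obtain ⟨k, hk, hmax⟩ := K.exists_max_image id hK
    simp only [K, Finset.mem_filter, Finset.mem_range, id] at hk hmax
    refine ⟨k, by omega, hk.2, fun hkN => ?_⟩
    by_contra hcon
    push Not at hcon
    have := hmax (k + 1) ⟨by omega, hcon⟩
    omega
  choose κ hκN hκ1 hκ2 using hex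
  have hmaps : ∀ i ∈ Finset.univ.filter (fun i => 0 < e i), κ i ∈ Finset.range (N + 1) := by
    intro i _
    rw [Finset.mem_range]; have := hκN i; omega
  rw [← Finset.sum_fiberwise_of_maps_to hmaps]
  refine Finset.sum_le_sum fun k hk => ?_
  have hk' : k ≤ N := by rw [Finset.mem_range] at hk; omega
  have hb : ∀ i ∈ (Finset.univ.filter (fun i => 0 < e i)).filter (fun i => κ i = k),
      e i ^ m ≤ β k ^ m := by
    intro i hi
    simp only [Finset.mem_filter, Finset.mem_univ, true_and] at hi
    exact pow_le_pow_left₀ hi.1.le (hi.2 ▸ hκ1 i) m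
  refine (Finset.sum_le_card_nsmul _ _ _ hb).trans ?_
  rw [nsmul_eq_mul]
  refine mul_le_mul_of_nonneg_right ?_ (pow_nonneg (hβ k) m)
  norm_cast
  rcases lt_or_eq_of_le hk' with hlt | heq
  · refine le_trans (Finset.card_le_card ?_) (hD k hlt)
    intro i hi
    simp only [Finset.mem_filter, Finset.mem_univ, true_and] at hi ⊢
    obtain ⟨_, h2⟩ := hi
    subst h2
    exact hκ2 i hlt
  · rw [heq]
    exact le_trans (Finset.card_le_univ _) hDN

end Count

section Regular
open Equiv
open scoped RealInnerProductSpace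
variable {α : Type*} [Fintype α] [DecidableEq α]

/-- left regular representation -/
def reg : Perm α →* (EuclideanSpace ℝ (Perm α) →ₗ[ℝ] EuclideanSpace ℝ (Perm α)) where
  toFun g :=
    { toFun := fun f => WithLp.toLp 2 (fun σ => f (g⁻¹ * σ))
      map_add' := fun f h => by ext σ; simp
      map_smul' := fun c f => by ext σ; simp }
  map_one' := by ext f σ; simp
  map_mul' := fun g h => by
    refine LinearMap.ext fun f => ?_
    ext σ; simp [mul_assoc]

lemma reg_apply (g : Perm α) (f : EuclideanSpace ℝ (Perm α)) (σ : Perm α) :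
    reg g f σ = f (g⁻¹ * σ) := rfl

lemma reg_orth (g : Perm α) (v w : EuclideanSpace ℝ (Perm α)) : ⟪reg g v, reg g w⟫ = ⟪v, w⟫ := by
  simp only [PiLp.inner_apply, reg_apply]
  exact Equiv.sum_comp (Equiv.mulLeft g⁻¹) (fun σ => ⟪v σ, w σ⟫)

/-- the functions fixed by permutations supported in `R` -/
def fixSub (R : Finset α) : Submodule ℝ (EuclideanSpace ℝ (Perm α)) where
  carrier := {w | Fxd reg R w}
  add_mem' := fun {a b} ha hb g hg => by rw [map_add, ha g hg, hb g hg]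
  zero_mem' := fun g _ => map_zero _
  smul_mem' := fun c {a} ha g hg => by rw [map_smul, ha g hg]

lemma finrank_fixSub (R : Finset α) :
    Module.finrank ℝ (fixSub R) ≤ (Fintype.card α).descFactorial (Fintype.card α - R.card) := by
  classical
  let π : Perm α → ({y // y ∉ R} ↪ α) := fun σ =>
    ⟨fun y => σ⁻¹ y, fun y z h => Subtype.ext (σ⁻¹.injective h)⟩
  let Φ : ({y // y ∉ R} ↪ α) → ℝ := 0
  let Ψ : (({y // y ∉ R} ↪ α) → ℝ) →ₗ[ℝ] EuclideanSpace ℝ (Perm α) :=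
    { toFun := fun f => WithLp.toLp 2 (fun σ => f (π σ))
      map_add' := fun f h => by ext σ; simp
      map_smul' := fun c f => by ext σ; simp }
  have hle : fixSub R ≤ LinearMap.range Ψ := by
    intro f hf
    have key : ∀ σ τ, π σ = π τ → f σ = f τ := by
      intro σ τ h
      have hO : Off R (σ * τ⁻¹) := by
        intro y hy
        have := congrArg (fun e => e ⟨y, hy⟩) h
        have h2 : σ⁻¹ y = τ⁻¹ y := this
        rw [Perm.mul_apply, ← h2]; simp
      have := hf _ hO
      have h3 := congrArg (fun v : EuclideanSpace ℝ (Perm α) => v σ) this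
      simp only [reg_apply] at h3
      rw [← h3]; simp
    refine ⟨fun p => if h : ∃ σ, π σ = p then f h.choose else 0, ?_⟩
    ext σ
    have hex : ∃ τ, π τ = π σ := ⟨σ, rfl⟩
    show (if h : ∃ τ, π τ = π σ then f h.choose else 0) = f σ
    rw [dif_pos hex]
    exact key _ _ hex.choose_spec
  refine (Submodule.finrank_mono hle).trans ((LinearMap.finrank_range_le Ψ).trans ?_)
  rw [Module.finrank_fintype_fun_eq_card, Fintype.card_embedding_eq]
  rw [Fintype.card_subtype_compl]
  simp

/-- low degree functions -/
def lowDeg (α : Type*) [Fintype α] [DecidableEq α] (j : ℕ) :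
    Submodule ℝ (EuclideanSpace ℝ (Perm α)) :=
  (Finset.powersetCard (Fintype.card α - j) (Finset.univ : Finset α)).sup fixSub

lemma finrank_sup_le' {ι E : Type*} [AddCommGroup E] [Module ℝ E] [FiniteDimensional ℝ E] [DecidableEq ι]
    (s : Finset ι) (f : ι → Submodule ℝ E) (d : ℕ) (h : ∀ i ∈ s, Module.finrank ℝ (f i) ≤ d) :
    Module.finrank ℝ (s.sup f : Submodule ℝ E) ≤ s.card * d := by
  induction s using Finset.induction_on with
  | empty => simp
  | insert i s hi ih =>
    rw [Finset.sup_insert, Finset.card_insert_of_notMem hi]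
    have h1 := Submodule.finrank_add_le_finrank_add_finrank (f i) (s.sup f)
    have h2 := ih (fun j hj => h j (Finset.mem_insert_of_mem hj))
    have h3 := h i (Finset.mem_insert_self i s)
    have h4 : (s.card + 1) * d = s.card * d + d := by ring
    omega

lemma finrank_lowDeg (j : ℕ) (hj : j ≤ Fintype.card α) : Module.finrank ℝ (lowDeg α j) ≤
    (Fintype.card α).choose j * (Fintype.card α).descFactorial j := by
  refine (finrank_sup_le' _ _ ((Fintype.card α).descFactorial j) ?_).trans ?_
  · intro R hR
    have := finrank_fixSub R
    rw [(Finset.mem_powersetCard.1 hR).2] at this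
    rwa [Nat.sub_sub_self hj] at this
  · rw [Finset.card_powersetCard, Finset.card_univ, Nat.choose_symm hj]

lemma lowDeg_inv (j : ℕ) (g : Perm α) (v) (hv : v ∈ lowDeg α j) : reg g v ∈ lowDeg α j := by
  have : lowDeg α j ≤ (lowDeg α j).comap (reg g) := by
    refine Finset.sup_le fun R hR => ?_
    intro w hw
    have hc : R.map g.toEmbedding ∈ Finset.powersetCard (Fintype.card α - j) (Finset.univ : Finset α) := by
      rw [Finset.mem_powersetCard] at hR ⊢
      exact ⟨Finset.subset_univ _, by rw [Finset.card_map]; exact hR.2⟩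
    refine (Finset.le_sup (f := fixSub) hc) ?_
    intro h hh
    have hO : Off R (g⁻¹ * h * g) := by
      intro y hy
      have : h (g y) = g y := hh _ (by simpa using hy)
      simp [this]
    have e1 := hw _ hO
    have e2 : h * g = g * (g⁻¹ * h * g) := by group
    calc reg h (reg g w) = reg (h * g) w := by rw [map_mul]; rfl
      _ = reg g (reg (g⁻¹ * h * g) w) := by rw [e2, map_mul]; simp [mul_assoc]
      _ = _ := by rw [e1]
  exact this hv

lemma lowDeg_orth_inv (j : ℕ) (g : Perm α) (v) (hv : v ∈ (lowDeg α j)ᗮ) :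
    reg g v ∈ (lowDeg α j)ᗮ := by
  rw [Submodule.mem_orthogonal] at hv ⊢
  intro u hu
  have := hv _ (lowDeg_inv j g⁻¹ u hu)
  rw [← reg_orth g] at this
  have e : reg g (reg g⁻¹ u) = u := by
    have : reg (g * g⁻¹) u = u := by simp
    rw [map_mul] at this; exact this
  rwa [e] at this

lemma lowDeg_orth_fxd (j : ℕ) (R : Finset α) (hR : Fintype.card α - j ≤ R.card) (w)
    (hw : w ∈ (lowDeg α j)ᗮ) (hf : Fxd reg R w) : w = 0 := by
  obtain ⟨R', hR', hc⟩ := Finset.exists_subset_card_eq hR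
  have h1 : w ∈ lowDeg α j := by
    refine (Finset.le_sup (f := fixSub) (b := R') ?_) (hf.mono hR')
    rw [Finset.mem_powersetCard]
    exact ⟨Finset.subset_univ _, hc⟩
  have := (Submodule.mem_orthogonal _ _).1 hw w h1
  exact inner_self_eq_zero.1 this

end Regular

set_option linter.unusedSectionVars false
section Link
open scoped RealInnerProductSpace
open Equiv

/-- the weights -/
def wt (a b : ℝ) {N : ℕ} (A : Finset (Fin N)) (i : Fin N) : ℝ := if i ∈ A then a else b

lemma swap_eq_iff' {α : Type*} [DecidableEq α] (i0 j0 i j : α) (h : i0 ≠ j0) :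
    swap i0 j0 = swap i j ↔ (i = i0 ∧ j = j0) ∨ (i = j0 ∧ j = i0) := by
  constructor
  · intro e
    have h1 := congrArg (fun g : Perm α => g i0) e
    have h2 := congrArg (fun g : Perm α => g j0) e
    simp only [swap_apply_left, swap_apply_right, swap_apply_def] at h1 h2
    grind
  · rintro (⟨rfl, rfl⟩ | ⟨rfl, rfl⟩)
    · rfl
    · exact swap_comm _ _

lemma swap_sum {α : Type*} [Fintype α] [DecidableEq α] (F : α → α → ℝ) (i0 j0 : α) (h : i0 ≠ j0) :
    (∑ i, ∑ j, if swap i0 j0 = swap i j then F i j else 0) = F i0 j0 + F j0 i0 := by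
  have : ∀ i j, (if swap i0 j0 = swap i j then F i j else 0) =
      (if i = i0 then if j = j0 then F i j else 0 else 0) +
      (if i = j0 then if j = i0 then F i j else 0 else 0) := by
    intro i j
    simp only [swap_eq_iff' _ _ _ _ h]
    split_ifs <;> grind
  simp [this, Finset.sum_add_distrib]

lemma transMat_eq (a b : ℝ) {N : ℕ} (A : Finset (Fin N)) (x y : Perm (Fin N)) :
    transMat a b A x y = ((N : ℝ) ^ 2)⁻¹ *
      ∑ i, ∑ j, if y * x⁻¹ = swap i j then wt a b A i * wt a b A j else 0 := by
  unfold transMat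
  by_cases hxy : y = x
  · subst hxy
    have : ∀ i j : Fin N, (y * y⁻¹ = swap i j) ↔ j = i := by
      intro i j
      rw [mul_inv_cancel, eq_comm (a := (1 : Perm (Fin N)))]
      rw [swap_eq_one_iff, eq_comm]
    simp only [this]
    simp only [if_true, Finset.sum_ite_eq', Finset.mem_univ]
    have e : ∑ i, wt a b A i * wt a b A i = a ^ 2 * A.card + b ^ 2 * Aᶜ.card := by
      rw [← Finset.sum_add_sum_compl A]
      rw [Finset.sum_congr rfl (g := fun _ => a ^ 2), Finset.sum_congr (s₁ := Aᶜ) rfl (g := fun _ => b ^ 2)]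
      · simp [mul_comm]
      · intro i hi
        rw [Finset.mem_compl] at hi
        simp [wt, hi]; ring
      · intro i hi
        simp [wt, hi]; ring
    rw [e]; ring
  rw [if_neg hxy]
  have hg : y * x⁻¹ ≠ 1 := by
    rwa [Ne, mul_inv_eq_one]
  generalize y * x⁻¹ = g at *
  by_cases hs : ∃ i j, i ≠ j ∧ g = swap i j
  · obtain ⟨i0, j0, h, rfl⟩ := hs
    rw [swap_sum _ _ _ h]
    simp only [swap_eq_iff' _ _ _ _ h]
    by_cases hi : i0 ∈ A <;> by_cases hj : j0 ∈ A
    · rw [if_pos ⟨i0, j0, h, hi, hj, by simp⟩]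
      simp [wt, hi, hj]; ring
    · rw [if_neg (by grind), if_neg (by grind), if_pos ⟨i0, j0, hi, hj, by simp⟩]
      simp [wt, hi, hj]; ring
    · rw [if_neg (by grind), if_neg (by grind), if_pos ⟨j0, i0, hj, hi, by simp⟩]
      simp [wt, hi, hj]; ring
    · rw [if_neg (by grind), if_pos ⟨i0, j0, h, hi, hj, by simp⟩]
      simp [wt, hi, hj]; ring
  · have hs' : ∀ i j, g ≠ swap i j := by
      intro i j e
      by_cases hij : i = j
      · subst hij; exact hg (by rw [e, swap_self]; rfl)
      · exact hs ⟨i, j, hij, e⟩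
    simp [hs']

lemma transMat_symm (a b : ℝ) {N : ℕ} (A : Finset (Fin N)) (x y : Perm (Fin N)) :
    transMat a b A x y = transMat a b A y x := by
  rw [transMat_eq, transMat_eq]
  have : ∀ i j, y * x⁻¹ = swap i j ↔ x * y⁻¹ = swap i j := by
    intro i j
    rw [← inv_inj, swap_inv]; simp
  simp only [this]

lemma transMat_right (a b : ℝ) {N : ℕ} (A : Finset (Fin N)) (x y g : Perm (Fin N)) :
    transMat a b A (x * g) (y * g) = transMat a b A x y := by
  rw [transMat_eq, transMat_eq]
  have : y * g * (x * g)⁻¹ = y * x⁻¹ := by group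
  rw [this]

/-- action of the matrix on a function -/
lemma transMat_apply (a b : ℝ) {N : ℕ} (A : Finset (Fin N)) (x : Perm (Fin N)) (f : Perm (Fin N) → ℝ) :
    ∑ y, transMat a b A x y * f y = ((N : ℝ) ^ 2)⁻¹ *
      ∑ i, ∑ j, wt a b A i * wt a b A j * f (swap i j * x) := by
  simp only [transMat_eq, mul_assoc]
  rw [← Finset.mul_sum]
  congr 1
  simp only [Finset.sum_mul]
  rw [Finset.sum_comm]
  refine Finset.sum_congr rfl fun i _ => ?_
  rw [Finset.sum_comm]
  refine Finset.sum_congr rfl fun j _ => ?_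
  simp only [mul_inv_eq_iff_eq_mul, ite_mul, zero_mul]
  simp [mul_assoc]

lemma sum_wt (a b : ℝ) (hab : a + b = 2) {n : ℕ} (A : Finset (Fin (2 * n))) (hA : A.card = n) :
    ∑ i, wt a b A i = 2 * n := by
  have hB : Aᶜ.card = n := by rw [Finset.card_compl, hA]; simp; omega
  rw [← Finset.sum_add_sum_compl A]
  rw [Finset.sum_congr rfl (g := fun _ => a), Finset.sum_congr (s₁ := Aᶜ) rfl (g := fun _ => b)]
  · simp [hA, hB]; rw [← hab]; ring
  · intro i hi
    rw [Finset.mem_compl] at hi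
    simp [wt, hi]
  · intro i hi
    simp [wt, hi]

lemma sum_wt_sq (a b : ℝ) {n : ℕ} (A : Finset (Fin (2 * n))) (hA : A.card = n) :
    ∑ i, wt a b A i * wt a b A i = (a ^ 2 + b ^ 2) * n := by
  have hB : Aᶜ.card = n := by rw [Finset.card_compl, hA]; simp; omega
  rw [← Finset.sum_add_sum_compl A]
  rw [Finset.sum_congr rfl (g := fun _ => a ^ 2), Finset.sum_congr (s₁ := Aᶜ) rfl (g := fun _ => b ^ 2)]
  · simp [hA, hB]; ring
  · intro i hi
    rw [Finset.mem_compl] at hi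
    simp [wt, hi]; ring
  · intro i hi
    simp [wt, hi]; ring

lemma transMat_row (a b : ℝ) (hab : a + b = 2) {n : ℕ} (hn : 0 < n) (A : Finset (Fin (2 * n)))
    (hA : A.card = n) (x) : ∑ y, transMat a b A x y = 1 := by
  have := transMat_apply a b A x (fun _ => 1)
  simp only [mul_one] at this
  rw [this]
  simp only [← Finset.mul_sum, ← Finset.sum_mul, sum_wt a b hab A hA]
  have : (n : ℝ) ≠ 0 := by positivity
  push_cast
  field_simp

/-- operator -/
def Pop (a b : ℝ) {N : ℕ} (A : Finset (Fin N)) :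
    EuclideanSpace ℝ (Perm (Fin N)) →ₗ[ℝ] EuclideanSpace ℝ (Perm (Fin N)) :=
  ((N : ℝ) ^ 2)⁻¹ • ∑ i, ∑ j, (wt a b A i * wt a b A j) • reg (swap i j)

lemma Pop_apply (a b : ℝ) {N : ℕ} (A : Finset (Fin N)) (f : EuclideanSpace ℝ (Perm (Fin N))) (x) :
    Pop a b A f x = ((N : ℝ) ^ 2)⁻¹ *
      ∑ i, ∑ j, wt a b A i * wt a b A j * f (swap i j * x) := by
  simp [Pop, LinearMap.sum_apply, reg_apply]

lemma Pop_eq (a b : ℝ) {N : ℕ} (A : Finset (Fin N)) :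
    Matrix.toEuclideanLin (transMat a b A) = Pop a b A := by
  ext f x
  rw [Pop_apply, ← transMat_apply]
  simp [Matrix.toLpLin_apply, Matrix.mulVec, dotProduct]

lemma Pop_inner (a b : ℝ) {N : ℕ} (A : Finset (Fin N)) (v : EuclideanSpace ℝ (Perm (Fin N))) :
    ⟪Pop a b A v, v⟫ = ((N : ℝ) ^ 2)⁻¹ *
      ∑ i, ∑ j, wt a b A i * wt a b A j * ⟪reg (swap i j) v, v⟫ := by
  simp [Pop, LinearMap.sum_apply, sum_inner, inner_smul_left]

end Link

set_option linter.unusedSectionVars false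
section Twist
open scoped RealInnerProductSpace
open Equiv

/-- sign as a real number -/
def sg {N : ℕ} (x : Perm (Fin N)) : ℝ := ((Perm.sign x : ℤ) : ℝ)

lemma sg_mul {N : ℕ} (x y : Perm (Fin N)) : sg (x * y) = sg x * sg y := by
  simp [sg]

lemma sg_sq {N : ℕ} (x : Perm (Fin N)) : sg x * sg x = 1 := by
  rw [← sg_mul]
  rcases Int.units_eq_one_or (Perm.sign x) with h | h <;> simp [sg, h]

/-- multiplication by the sign -/
def tw (N : ℕ) : EuclideanSpace ℝ (Perm (Fin N)) →ₗ[ℝ] EuclideanSpace ℝ (Perm (Fin N)) where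
  toFun f := WithLp.toLp 2 (fun x => sg x * f x)
  map_add' f g := by ext x; simp [mul_add]
  map_smul' c f := by ext x; simp; ring

lemma tw_apply {N : ℕ} (f : EuclideanSpace ℝ (Perm (Fin N))) (x) : tw N f x = sg x * f x := rfl

lemma tw_inner {N : ℕ} (f g : EuclideanSpace ℝ (Perm (Fin N))) : ⟪tw N f, g⟫ = ⟪f, tw N g⟫ := by
  simp only [PiLp.inner_apply, tw_apply]
  refine Finset.sum_congr rfl fun x _ => ?_
  simp; ring

lemma tw_tw {N : ℕ} (f : EuclideanSpace ℝ (Perm (Fin N))) : tw N (tw N f) = f := by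
  ext x; rw [tw_apply, tw_apply, ← mul_assoc, sg_sq, one_mul]

lemma sg_swap {N : ℕ} (i j : Fin N) : sg (swap i j) = if j = i then 1 else -1 := by
  split_ifs with h
  · subst h; simp [sg]
  · simp [sg, Perm.sign_swap (Ne.symm h)]

lemma Pop_tw (a b : ℝ) {n : ℕ} (hn : 0 < n) (A : Finset (Fin (2 * n))) (hA : A.card = n)
    (f : EuclideanSpace ℝ (Perm (Fin (2 * n)))) :
    Pop a b A (tw _ f) = tw _ (((a ^ 2 + b ^ 2) / (2 * n)) • f - Pop a b A f) := by
  ext x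
  rw [Pop_apply, tw_apply]
  simp only [PiLp.sub_apply, PiLp.smul_apply, smul_eq_mul, Pop_apply, tw_apply, sg_mul, sg_swap]
  have key : ∀ i j, wt a b A i * wt a b A j * ((if j = i then (1:ℝ) else -1) * sg x * f (swap i j * x)) =
    (if j = i then 2 * (wt a b A i * wt a b A j) * (sg x * f x) else 0) -
      sg x * (wt a b A i * wt a b A j * f (swap i j * x)) := by
    intro i j
    split_ifs with h
    · subst h; rw [swap_self, ← Perm.one_def, one_mul]; ring
    · ring
  simp only [key, Finset.sum_sub_distrib, ← Finset.mul_sum, Finset.sum_ite_eq', Finset.mem_univ, if_true,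
    ← Finset.sum_mul, sum_wt_sq a b A hA]
  have : (n : ℝ) ≠ 0 := by positivity
  push_cast
  field_simp

lemma trace_pow_eig {ι : Type*} [Fintype ι] [DecidableEq ι] {M : Matrix ι ι ℝ} (hM : M.IsHermitian)
    (m : ℕ) : (M ^ m).trace = ∑ i, hM.eigenvalues i ^ m := by
  conv_lhs => rw [hM.spectral_theorem, ← map_pow, Unitary.conjStarAlgAut_apply, Matrix.trace_mul_cycle,
    Unitary.coe_star_mul_self, one_mul, Matrix.diagonal_pow, Matrix.trace_diagonal]
  simp


/-- the eigenvalue bounds -/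
def bet (b : ℝ) (n k : ℕ) : ℝ :=
  if 2 * k ≤ n then 1 - 2 * b * k * (2 * n - k + 1) / (2 * n) ^ 2 else 1 - b * k / (2 * n)

/-- dimension bounds -/
def dm (N k : ℕ) : ℕ := N.choose k * N.descFactorial k

lemma Pop_bias (a b : ℝ) (hb : 0 < b) (hba : b ≤ a) (hab : a + b = 2) {n : ℕ} (hn : 0 < n)
    (A : Finset (Fin (2 * n))) (hA : A.card = n) (v) : ⟪Pop a b A v, v⟫ ≤
    (((2 * n : ℝ)) ^ 2)⁻¹ * (b * ⟪fullOp reg Finset.univ v, v⟫ + (1 - b) * (2 * n) ^ 2 * ⟪v, v⟫) := by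
  have hB : Aᶜ.card = n := by rw [Finset.card_compl, hA]; simp; omega
  rw [Pop_inner]
  have := bias_le (ρ := reg (α := Fin (2 * n))) reg_orth a b hb hba hab n A hA hB v
  push_cast
  refine mul_le_mul_of_nonneg_left ?_ (by positivity)
  exact this

lemma Pop_le_one (a b : ℝ) (hb : 0 < b) (hba : b ≤ a) (hab : a + b = 2) {n : ℕ} (hn : 0 < n)
    (A : Finset (Fin (2 * n))) (hA : A.card = n) (v) : ⟪Pop a b A v, v⟫ ≤ 1 * ⟪v, v⟫ := by
  refine (Pop_bias a b hb hba hab hn A hA v).trans ?_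
  have h1 := full_le1 (ρ := reg (α := Fin (2 * n))) reg_orth (2 * n) ⊤ (Finset.univ : Finset (Fin (2 * n)))
    (by simp) (by
      intro R _ hR
      have := Finset.card_le_univ R
      simp at this; omega) v (by simp)
  simp only [Finset.card_univ, Fintype.card_fin] at h1
  push_cast at h1
  have hn' : (n : ℝ) ≠ 0 := by positivity
  rw [inv_mul_le_iff₀ (by positivity)]
  nlinarith

lemma Pop_le (a b : ℝ) (hb : 0 < b) (hba : b ≤ a) (hab : a + b = 2) {n : ℕ} (hn : 0 < n)
    (A : Finset (Fin (2 * n))) (hA : A.card = n) (k : ℕ) (hk : k < 2 * n) (v) (hv : v ∈ (lowDeg (Fin (2 * n)) k)ᗮ) :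
    ⟪Pop a b A v, v⟫ ≤ bet b n (k + 1) * ⟪v, v⟫ := by
  refine (Pop_bias a b hb hba hab hn A hA v).trans ?_
  have hn' : (n : ℝ) ≠ 0 := by positivity
  have hinv : ∀ g : Perm (Fin (2 * n)), Off Finset.univ g → ∀ v ∈ (lowDeg (Fin (2 * n)) k)ᗮ,
      reg g v ∈ (lowDeg (Fin (2 * n)) k)ᗮ := fun g _ v hv => lowDeg_orth_inv k g v hv
  have hfx : ∀ R ⊆ (Finset.univ : Finset (Fin (2 * n))), 2 * n - (k + 1) < R.card →
      ∀ w ∈ (lowDeg (Fin (2 * n)) k)ᗮ, Fxd reg R w → w = 0 := by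
    intro R _ hR w hw hf
    exact lowDeg_orth_fxd k R (by simp; omega) w hw hf
  rw [inv_mul_le_iff₀ (by positivity)]
  unfold bet
  split_ifs with hc
  · have hcu : (Finset.univ : Finset (Fin (2 * n))).card = 2 * n := by
      rw [Finset.card_univ, Fintype.card_fin]
    have hkn : k + 1 ≤ n := by omega
    have := full_le2 (ρ := reg (α := Fin (2 * n))) reg_orth n (k + 1) hkn ((lowDeg (Fin (2 * n)) k)ᗮ) Finset.univ hcu hinv hfx v hv
    clear hinv hfx hv
    have e : (2 * (n:ℝ)) ^ 2 * ((1 - 2 * b * ((k + 1 : ℕ) : ℝ) * (2 * n - ((k + 1 : ℕ) : ℝ) + 1) / (2 * n) ^ 2) * ⟪v, v⟫)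
      = b * (((2*n:ℝ)^2 - 2*((k + 1 : ℕ) : ℝ)*(2*n-((k + 1 : ℕ) : ℝ)+1)) * ⟪v,v⟫) + (1 - b) * (2 * n) ^ 2 * ⟪v, v⟫ := by
      field_simp
      ring
    rw [e]
    nlinarith
  · have := full_le1 (ρ := reg (α := Fin (2 * n))) reg_orth (2 * n - (k + 1)) _ Finset.univ hinv hfx v hv
    rw [Nat.cast_sub (by omega)] at this
    simp only [Finset.card_univ, Fintype.card_fin] at this
    push_cast at this
    have e : (2 * (n:ℝ)) ^ 2 * ((1 - b * ((k + 1 : ℕ) : ℝ) / (2 * n)) * ⟪v, v⟫)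
      = b * (2 * n * (2 * n - (k + 1)) * ⟪v,v⟫) + (1 - b) * (2 * n) ^ 2 * ⟪v, v⟫ := by
      push_cast
      field_simp
      ring
    rw [e]
    nlinarith

lemma bet_nonneg (b : ℝ) {n : ℕ} (hb : 0 < b) (hb1 : b ≤ 1) (k : ℕ) (hk : k ≤ 2 * n) (hn : 0 < n) : 0 ≤ bet b n k := by
  have hn' : (0:ℝ) < n := by positivity
  have hk' : (k : ℝ) ≤ 2 * n := by exact_mod_cast hk
  unfold bet
  split_ifs with h
  · have h' : (2 : ℝ) * k ≤ n := by exact_mod_cast h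
    have hk0 : (0:ℝ) ≤ k := by positivity
    rw [sub_nonneg, div_le_one (by positivity)]
    by_cases h0 : k = 0
    · subst h0; simp
    have : (1:ℝ) ≤ k := by exact_mod_cast Nat.one_le_iff_ne_zero.mpr h0
    have h3 : (k:ℝ) * (2 * n - k + 1) ≤ n * (2 * n) := by nlinarith
    have h4 : 0 ≤ (k:ℝ) * (2 * n - k + 1) := mul_nonneg hk0 (by linarith)
    nlinarith
  · rw [sub_nonneg, div_le_one (by positivity)]
    nlinarith

lemma neg_Pop_aux (a b : ℝ) (hb : 0 < b) (hba : b ≤ a) (hab : a + b = 2) {n : ℕ} (hn : 0 < n)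
    (A : Finset (Fin (2 * n))) (hA : A.card = n) (v) (β : ℝ) (h : ⟪Pop a b A (tw _ v), tw _ v⟫ ≤ β * ⟪tw _ v, tw _ v⟫) :
    ⟪(-Pop a b A) v, v⟫ ≤ (β - (a ^ 2 + b ^ 2) / (2 * n)) * ⟪v, v⟫ := by
  rw [Pop_tw a b hn A hA, tw_inner, tw_inner, tw_tw] at h
  rw [inner_sub_left, inner_smul_left] at h
  simp at h ⊢
  linarith

lemma trace_le (a b : ℝ) (hb : 0 < b) (hba : b ≤ a) (hab : a + b = 2) {n : ℕ} (hn : 0 < n)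
    (A : Finset (Fin (2 * n))) (hA : A.card = n) (m : ℕ) (hm : Even m) (hm0 : 0 < m) : (transMat a b A ^ m).trace ≤
    (1 + ∑ k ∈ Finset.range (2 * n), (dm (2 * n) (k + 1) : ℝ) * bet b n (k + 1) ^ m) +
    ((1 - 1 / n) ^ m + ∑ k ∈ Finset.range (2 * n), (dm (2 * n) (k + 1) : ℝ) * bet b n (k + 1) ^ m) := by
  classical
  have hb1 : b ≤ 1 := by linarith
  have hH : (transMat a b A).IsHermitian := by
    ext x y; simp [transMat_symm a b A y x]
  set e := hH.eigenvalues with he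
  set u := hH.eigenvectorBasis with hu
  have hPu : ∀ i, Pop a b A (u i) = e i • u i := by
    intro i
    rw [← Pop_eq]
    ext x
    have := congrFun (hH.mulVec_eigenvectorBasis i) x
    simpa [Matrix.toLpLin_apply] using this
  have htr : (transMat a b A ^ m).trace = ∑ i, e i ^ m := by
    exact trace_pow_eig hH m
  have hcard : Fintype.card (Perm (Fin (2 * n))) ≤ dm (2 * n) (2 * n) := by
    simp [dm, Fintype.card_perm, Nat.descFactorial_self]
  have hfin : ∀ k < 2 * n, Module.finrank ℝ (lowDeg (Fin (2 * n)) k) ≤ dm (2 * n) k := by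
    intro k hk
    have := finrank_lowDeg (α := Fin (2 * n)) k (by simp; omega)
    simpa [dm] using this
  have hun : ∀ i, ⟪u i, u i⟫ = 1 := by
    intro i; rw [real_inner_self_eq_norm_sq, u.orthonormal.1 i]; norm_num
  -- positive eigenvalues
  have L1 := layer e (2 * n) m (fun k => if k = 0 then 1 else if k ≤ 2 * n then bet b n k else 0) (dm (2 * n))
    (by
      intro k
      split_ifs with h1 h2
      · norm_num
      · exact bet_nonneg b hb hb1 k h2 hn
      · exact le_rfl)
    (by
      intro i
      have := Pop_le_one a b hb hba hab hn A hA (u i)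
      rw [hPu, inner_smul_left, hun] at this
      simpa using this)
    (by
      intro k hk
      refine (count_le (Pop a b A) u e hPu (lowDeg (Fin (2 * n)) k) _ ?_).trans (hfin k hk)
      intro v hv
      have := Pop_le a b hb hba hab hn A hA k hk v hv
      simpa [Nat.succ_le_iff.mpr hk] using this) hcard
  have hδ : (1:ℝ) / n ≤ (a ^ 2 + b ^ 2) / (2 * n) := by
    have hn' : (0:ℝ) < n := by positivity
    rw [div_le_div_iff₀ hn' (by positivity)]
    have : 2 ≤ a ^ 2 + b ^ 2 := by nlinarith [sq_nonneg (a - b)]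
    nlinarith
  have hn1 : (1:ℝ) / n ≤ 1 := by
    rw [div_le_one (by positivity)]; exact_mod_cast hn
  have L2 := layer (-e) (2 * n) m (fun k => if k = 0 then 1 - 1 / n else if k ≤ 2 * n then bet b n k else 0) (dm (2 * n))
    (by
      intro k
      split_ifs with h1 h2
      · linarith
      · exact bet_nonneg b hb hb1 k h2 hn
      · exact le_rfl)
    (by
      intro i
      have := neg_Pop_aux a b hb hba hab hn A hA (u i) 1 (Pop_le_one a b hb hba hab hn A hA _)
      rw [LinearMap.neg_apply, hPu, inner_neg_left, inner_smul_left, hun] at this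
      simp at this ⊢
      simp at hδ
      linarith)
    (by
      intro k hk
      refine (count_le (-Pop a b A) u (-e) (by intro i; simp [hPu]) ((lowDeg (Fin (2 * n)) k).map (tw _)) _ ?_).trans
        ((Submodule.finrank_map_le _ _).trans (hfin k hk))
      intro v hv
      have hv' : tw _ v ∈ (lowDeg (Fin (2 * n)) k)ᗮ := by
        rw [Submodule.mem_orthogonal] at hv ⊢
        intro z hz
        rw [← tw_inner]
        exact hv _ (Submodule.mem_map_of_mem hz)
      have := neg_Pop_aux a b hb hba hab hn A hA v _ (Pop_le a b hb hba hab hn A hA k hk _ hv')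
      simp only [Nat.succ_le_iff.mpr hk, Nat.succ_ne_zero, if_true, if_false]
      refine this.trans (mul_le_mul_of_nonneg_right ?_ real_inner_self_nonneg)
      have : (0:ℝ) ≤ 1 / n := by positivity
      linarith) hcard
  have hsplit : ∑ i, e i ^ m ≤ ∑ i ∈ Finset.univ.filter (0 < e ·), e i ^ m +
      ∑ i ∈ Finset.univ.filter (0 < (-e) ·), (-e) i ^ m := by
    rw [Finset.sum_filter, Finset.sum_filter, ← Finset.sum_add_distrib]
    refine Finset.sum_le_sum fun i _ => ?_
    rcases lt_trichotomy (e i) 0 with h | h | h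
    · simp [h, hm.neg_pow, not_lt.mpr h.le]
    · simp [h, hm0.ne']
    · simp [h, not_lt.mpr h.le]
  rw [htr]
  refine hsplit.trans (add_le_add (L1.trans_eq ?_) (L2.trans_eq ?_))
  · rw [Finset.sum_range_succ', add_comm]
    congr 1
    · simp [dm]
    · refine Finset.sum_congr rfl fun k hk => ?_
      simp [Nat.succ_le_iff.mpr (Finset.mem_range.mp hk)]
  · rw [Finset.sum_range_succ', add_comm]
    congr 1
    · simp [dm]
    · refine Finset.sum_congr rfl fun k hk => ?_
      simp [Nat.succ_le_iff.mpr (Finset.mem_range.mp hk)]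

end Twist

set_option linter.unusedSectionVars false
section Analytic
open Real

/-- dominating sequence -/
def ss (k : ℕ) : ℝ := exp (k * (3 - log k / 2))

lemma ss_nonneg (k : ℕ) : 0 ≤ ss k := (exp_pos _).le

lemma ss_summable : Summable ss := by
  refine Summable.of_norm_bounded_eventually_nat (g := fun k : ℕ => exp (-(k:ℝ))) Real.summable_exp_neg_nat ?_
  filter_upwards [Filter.eventually_ge_atTop (⌈exp 8⌉₊)] with k hk
  have hk' : exp 8 ≤ k := Nat.ceil_le.mp hk
  have : 8 ≤ log k := by
    rw [le_log_iff_exp_le ((exp_pos _).trans_le hk')]; exact hk'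
  rw [Real.norm_of_nonneg (ss_nonneg k)]
  unfold ss
  apply exp_le_exp.mpr
  have : (0:ℝ) ≤ k := by positivity
  nlinarith

lemma pow_le_exp' (x y : ℝ) (m : ℕ) (hx : 0 ≤ x) (h : x ≤ exp (-y)) : x ^ m ≤ exp (-(y * m)) := by
  calc x ^ m ≤ exp (-y) ^ m := pow_le_pow_left₀ hx h m
    _ = _ := by rw [← exp_nat_mul]; congr 1; ring

lemma one_sub_le_exp2 (x : ℝ) (hx : 0 ≤ x) (hx1 : x ≤ 1) : 1 - x ≤ exp (-(x + x ^ 2 / 2)) := by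
  rcases hx1.eq_or_lt with rfl | h
  · simp; positivity
  · have := hasSum_pow_div_log_of_abs_lt_one (x := x) (by rw [abs_of_nonneg hx]; exact h)
    have h2 := sum_le_hasSum (Finset.range 2) (fun i _ => by positivity) this
    simp [Finset.sum_range_succ] at h2
    rw [← log_le_iff_le_exp (by linarith)]
    norm_num at h2
    linarith

lemma factorial_inv_le (k : ℕ) (hk : 0 < k) : ((k.factorial : ℝ))⁻¹ ≤ exp (k * (1 - log k)) := by
  have h := pow_div_factorial_le_exp (k:ℝ) (by positivity) k
  have hk' : (0:ℝ) < k := by exact_mod_cast hk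
  have e : exp (k * (1 - log k)) = exp k / (k:ℝ) ^ k := by
    rw [← exp_log (pow_pos hk' k), log_pow, ← exp_sub]; congr 1; ring
  rw [e, le_div_iff₀ (by positivity)]
  rw [div_eq_mul_inv] at h
  linarith

lemma regI (b c : ℝ) (hb : 0 < b) (hb1 : b ≤ 1) (hc : 0 < c) (n k m : ℕ) (hk : 0 < k) (hkn : 2 * k ≤ n)
    (hm : (2 * n : ℝ) / b * (log (2 * n) + c) ≤ m) :
    (dm (2 * n) k : ℝ) * bet b n k ^ m ≤ exp (-2 * c) * ss k := by
  have hn : 0 < n := by omega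
  have hn' : (0:ℝ) < n := by exact_mod_cast hn
  have hk' : (0:ℝ) < k := by exact_mod_cast hk
  have hk1 : (1:ℝ) ≤ k := by exact_mod_cast hk
  have hkn' : (2:ℝ) * k ≤ n := by exact_mod_cast hkn
  set L := log (2 * n) with hL
  have hL0 : 0 ≤ L := log_nonneg (by linarith)
  have hdm : (dm (2 * n) k : ℝ) ≤ exp (2 * k * L) * (k.factorial : ℝ)⁻¹ := by
    have h1 : (((2 * n).choose k : ℕ) : ℝ) ≤ ((2 * n : ℕ) : ℝ) ^ k / k.factorial := Nat.choose_le_pow_div k (2 * n)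
    have h2 : (((2 * n).descFactorial k : ℕ) : ℝ) ≤ ((2 * n : ℕ) : ℝ) ^ k := by
      exact_mod_cast Nat.descFactorial_le_pow (2 * n) k
    have e : exp (2 * k * L) = ((2 * n : ℕ) : ℝ) ^ k * ((2 * n : ℕ) : ℝ) ^ k := by
      rw [← exp_log (x := ((2 * n : ℕ) : ℝ) ^ k) (by positivity), log_pow, ← exp_add]
      congr 1; push_cast; rw [← hL]; ring
    rw [dm, Nat.cast_mul, e]
    calc _ ≤ (((2 * n : ℕ) : ℝ) ^ k / k.factorial) * ((2 * n : ℕ) : ℝ) ^ k := by gcongr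
      _ = _ := by ring
  set q : ℝ := 2 * k * (2 * n - k + 1) / (2 * n) with hq
  have hq2 : 2 ≤ q := by
    rw [hq, le_div_iff₀ (by positivity)]
    nlinarith
  have hbet : bet b n k ^ m ≤ exp (-(q * (L + c))) := by
    have h0 := bet_nonneg b hb hb1 k (by omega) hn
    have h1 : bet b n k ≤ exp (-(2 * b * k * (2 * n - k + 1) / (2 * n) ^ 2)) := by
      rw [bet, if_pos hkn]
      exact one_sub_le_exp_neg _
    refine (pow_le_exp' _ _ m h0 h1).trans (exp_le_exp.mpr (neg_le_neg ?_))
    have h3 : 0 ≤ 2 * b * k * (2 * n - k + 1) / (2 * n) ^ 2 := by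
      have : (0:ℝ) ≤ 2 * n - k + 1 := by linarith
      positivity
    refine le_trans (le_of_eq ?_) (mul_le_mul_of_nonneg_left hm h3)
    rw [hq]; field_simp
  have hlog : 2 * k / (2 * n) * L ≤ log k / 2 + 2 := by
    have h1 : L = log k + log (2 * n / k) := by
      rw [hL, ← log_mul (by positivity) (by positivity)]; congr 1; field_simp
    have h2 : log (2 * n / k) ≤ 2 * n / k := (log_le_sub_one_of_pos (by positivity)).trans (by linarith)
    have h3 : 0 ≤ log (k:ℝ) := log_nonneg hk1
    have h4 : 2 * (k:ℝ) / (2 * n) ≤ 1 / 2 := by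
      rw [div_le_div_iff₀ (by positivity) (by norm_num)]; linarith
    have h5 : 2 * (k:ℝ) / (2 * n) * log (2 * n / k) ≤ 2 := by
      refine (mul_le_mul_of_nonneg_left h2 (by positivity)).trans (le_of_eq ?_)
      field_simp
    rw [h1, mul_add]
    nlinarith
  calc (dm (2 * n) k : ℝ) * bet b n k ^ m
      ≤ (exp (2 * k * L) * exp (k * (1 - log k))) * exp (-(q * (L + c))) := by
        refine mul_le_mul (hdm.trans ?_) hbet (pow_nonneg (bet_nonneg b hb hb1 k (by omega) hn) _) (by positivity)
        exact mul_le_mul_of_nonneg_left (factorial_inv_le k hk) (exp_pos _).le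
    _ ≤ exp (-2 * c) * ss k := by
        rw [ss, ← exp_add, ← exp_add, ← exp_add]
        apply exp_le_exp.mpr
        have e1 : 2 * k * L - q * L = (k - 1) * (2 * k / (2 * n) * L) := by
          rw [hq]; field_simp; ring
        have e2 : (k - 1) * (2 * k / (2 * n) * L) ≤ k * (2 * k / (2 * n) * L) := by
          apply mul_le_mul_of_nonneg_right (by linarith); positivity
        have e3 := mul_le_mul_of_nonneg_left hlog hk'.le
        nlinarith

lemma regII (b c : ℝ) (hb : 0 < b) (hb1 : b ≤ 1) (hc : 0 < c) (n k m : ℕ) (hn2 : 2 ≤ n) (hk : k ≤ 2 * n) (hkn : ¬ 2 * k ≤ n)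
    (hm : (2 * n : ℝ) / b * (log (2 * n) + c) ≤ m) :
    (dm (2 * n) k : ℝ) * bet b n k ^ m ≤ exp (-2 * c) * exp (2 * n * (log 2 - b / 32 * log (2 * n))) := by
  have hn : 0 < n := by omega
  have hn' : (0:ℝ) < n := by exact_mod_cast hn
  have hk2 : (2:ℝ) ≤ k := by
    have : 2 ≤ k := by omega
    exact_mod_cast this
  have hk2n : (k:ℝ) ≤ 2 * n := by exact_mod_cast hk
  have hkn' : (n:ℝ) ≤ 2 * k := by
    have : n ≤ 2 * k := by omega
    exact_mod_cast this
  set L := log (2 * n) with hL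
  have hL0 : 0 ≤ L := log_nonneg (by linarith)
  have hdm : (dm (2 * n) k : ℝ) ≤ exp (2 * n * log 2) * exp (k * L) := by
    have h1 : (((2 * n).choose k : ℕ) : ℝ) ≤ (2:ℝ) ^ (2 * n) := by
      exact_mod_cast Nat.choose_le_two_pow (2 * n) k
    have h2 : (((2 * n).descFactorial k : ℕ) : ℝ) ≤ ((2 * n : ℕ) : ℝ) ^ k := by
      exact_mod_cast Nat.descFactorial_le_pow (2 * n) k
    have e : exp (k * L) = ((2 * n : ℕ) : ℝ) ^ k := by
      rw [← exp_log (x := ((2 * n : ℕ) : ℝ) ^ k) (by positivity), log_pow]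
      congr 1; push_cast; rw [← hL]
    have e2 : exp (2 * n * log 2) = (2:ℝ) ^ (2 * n) := by
      rw [← exp_log (x := (2:ℝ) ^ (2 * n)) (by positivity), log_pow]
      congr 1; push_cast; ring
    rw [dm, Nat.cast_mul, e, e2]
    gcongr
  have hbet : bet b n k ^ m ≤ exp (-((k + b * k ^ 2 / (4 * n)) * (L + c))) := by
    have h0 := bet_nonneg b hb hb1 k hk hn
    have hx0 : 0 ≤ b * k / (2 * n) := by positivity
    have h1 : bet b n k ≤ exp (-(b * k / (2 * n) + (b * k / (2 * n)) ^ 2 / 2)) := by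
      rw [bet, if_neg hkn] at h0 ⊢
      exact one_sub_le_exp2 _ hx0 (by linarith)
    refine (pow_le_exp' _ _ m h0 h1).trans (exp_le_exp.mpr (neg_le_neg ?_))
    refine le_trans (le_of_eq ?_) (mul_le_mul_of_nonneg_left hm (by positivity))
    field_simp
    ring
  calc (dm (2 * n) k : ℝ) * bet b n k ^ m
      ≤ (exp (2 * n * log 2) * exp (k * L)) * exp (-((k + b * k ^ 2 / (4 * n)) * (L + c))) :=
        mul_le_mul hdm hbet (pow_nonneg (bet_nonneg b hb hb1 k hk hn) _) (by positivity)
    _ ≤ _ := by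
        rw [← exp_add, ← exp_add, ← exp_add]
        apply exp_le_exp.mpr
        have e1 : b * n / 16 ≤ b * k ^ 2 / (4 * n) := by
          rw [div_le_div_iff₀ (by positivity) (by positivity)]
          have : (n:ℝ) ^ 2 ≤ (2 * k) ^ 2 := pow_le_pow_left₀ hn'.le hkn' 2
          nlinarith
        have e2 := mul_le_mul_of_nonneg_right e1 hL0
        have e3 : 0 ≤ b * k ^ 2 / (4 * n) * c := by positivity
        nlinarith

lemma sum_est (b : ℝ) (hb : 0 < b) (hb1 : b ≤ 1) : ∃ n0 : ℕ, ∀ n : ℕ, n0 ≤ n → ∀ c : ℝ, 0 < c → ∀ m : ℕ,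
    (2 * n : ℝ) / b * (log (2 * n) + c) ≤ m →
    ∑ k ∈ Finset.range (2 * n), (dm (2 * n) (k + 1) : ℝ) * bet b n (k + 1) ^ m ≤
      exp (-2 * c) * ((∑' k, ss k) + 1) := by
  refine ⟨max 2 ⌈exp (64 * log 2 / b)⌉₊, fun n hn c hc m hm => ?_⟩
  have hn2 : 2 ≤ n := (le_max_left _ _).trans hn
  have hne : exp (64 * log 2 / b) ≤ n := Nat.ceil_le.mp ((le_max_right _ _).trans hn)
  have hn' : (0:ℝ) < n := by positivity
  have hL : 64 * log 2 / b ≤ log (2 * n) := by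
    rw [le_log_iff_exp_le (by positivity)]; linarith
  set Z := exp (2 * n * (log 2 - b / 32 * log (2 * n))) with hZ
  have hterm : ∀ k ∈ Finset.range (2 * n), (dm (2 * n) (k + 1) : ℝ) * bet b n (k + 1) ^ m ≤
      exp (-2 * c) * ss (k + 1) + exp (-2 * c) * Z := by
    intro k hk
    rw [Finset.mem_range] at hk
    by_cases h : 2 * (k + 1) ≤ n
    · have := regI b c hb hb1 hc n (k + 1) m (by omega) h hm
      have : 0 ≤ exp (-2 * c) * Z := by positivity
      linarith
    · have := regII b c hb hb1 hc n (k + 1) m hn2 (by omega) h hm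
      have : 0 ≤ exp (-2 * c) * ss (k + 1) := mul_nonneg (exp_pos _).le (ss_nonneg _)
      linarith
  refine (Finset.sum_le_sum hterm).trans ?_
  rw [Finset.sum_add_distrib, ← Finset.mul_sum, Finset.sum_const, Finset.card_range, nsmul_eq_mul]
  have h1 : ∑ k ∈ Finset.range (2 * n), ss (k + 1) ≤ ∑' k, ss k := by
    have := ss_summable.sum_le_tsum (Finset.range (2 * n + 1)) (fun k _ => ss_nonneg k)
    rw [Finset.sum_range_succ'] at this
    have := ss_nonneg 0
    linarith
  have h2 : ((2 * n : ℕ) : ℝ) * Z ≤ 1 := by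
    have hp : ((2 * n : ℕ) : ℝ) ≤ exp (2 * n * log 2) := by
      have e2 : exp (2 * n * log 2) = (2:ℝ) ^ (2 * n) := by
        rw [← exp_log (x := (2:ℝ) ^ (2 * n)) (by positivity), log_pow]
        congr 1; push_cast; ring
      rw [e2]
      exact_mod_cast (Nat.lt_two_pow_self (n := 2 * n)).le
    calc _ ≤ exp (2 * n * log 2) * Z := mul_le_mul_of_nonneg_right hp (exp_pos _).le
      _ ≤ exp 0 := by
        rw [hZ, ← exp_add]
        apply exp_le_exp.mpr
        rw [div_le_iff₀ hb] at hL
        have : 2 * log 2 - b / 32 * log (2 * n) ≤ 0 := by linarith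
        nlinarith
      _ = 1 := exp_zero
  have := exp_pos (-2 * c)
  nlinarith

end Analytic

set_option linter.unusedSectionVars false
section Final
open Equiv

lemma pow_symm' (a b : ℝ) {N : ℕ} (A : Finset (Fin N)) (t : ℕ) (x y) :
    (transMat a b A ^ t) x y = (transMat a b A ^ t) y x := by
  have h : (transMat a b A).IsSymm := by
    ext x y; simp [transMat_symm a b A y x]
  have := (h.pow t)
  exact this.apply y x

lemma pow_right' (a b : ℝ) {N : ℕ} (A : Finset (Fin N)) (t : ℕ) : ∀ x y g,
    (transMat a b A ^ t) (x * g) (y * g) = (transMat a b A ^ t) x y := by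
  induction t with
  | zero => intro x y g; simp [Matrix.one_apply]
  | succ t ih =>
    intro x y g
    rw [pow_succ, Matrix.mul_apply, Matrix.mul_apply, ← Equiv.sum_comp (Equiv.mulRight g)]
    simp only [Equiv.coe_mulRight, ih, transMat_right]

lemma pow_row' (a b : ℝ) (hab : a + b = 2) {n : ℕ} (hn : 0 < n) (A : Finset (Fin (2 * n)))
    (hA : A.card = n) (t : ℕ) : ∀ x, ∑ y, (transMat a b A ^ t) x y = 1 := by
  induction t with
  | zero => intro x; simp [Matrix.one_apply]
  | succ t ih =>
    intro x
    simp only [pow_succ, Matrix.mul_apply]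
    rw [Finset.sum_comm]
    simp only [← Finset.mul_sum, transMat_row a b hab hn A hA, mul_one, ih]

lemma dTV_sq_le (a b : ℝ) (hab : a + b = 2) {n : ℕ} (hn : 0 < n) (A : Finset (Fin (2 * n)))
    (hA : A.card = n) (t : ℕ) :
    (2 * dTV (fun y => (transMat a b A ^ t) 1 y) (unif (2 * n))) ^ 2 ≤
      (transMat a b A ^ (2 * t)).trace - 1 := by
  set p := fun y => (transMat a b A ^ t) 1 y with hp
  set F : ℝ := ((2 * n).factorial : ℝ) with hF
  have hF0 : 0 < F := by positivity
  have hcard : (Fintype.card (Perm (Fin (2 * n))) : ℝ) = F := by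
    simp [Fintype.card_perm, hF]
  have h1 : ∑ y, p y = 1 := pow_row' a b hab hn A hA t 1
  have h2 : ∑ y, p y ^ 2 = (transMat a b A ^ (2 * t)) 1 1 := by
    rw [two_mul t, pow_add, Matrix.mul_apply]
    refine Finset.sum_congr rfl fun y _ => ?_
    rw [pow_symm' a b A t y 1, sq]
  have h3 : (transMat a b A ^ (2 * t)).trace = F * (transMat a b A ^ (2 * t)) 1 1 := by
    rw [Matrix.trace, ← hcard]
    rw [Finset.sum_congr rfl (g := fun _ => (transMat a b A ^ (2 * t)) 1 1)]
    · simp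
    · intro x _
      have := pow_right' a b A (2 * t) 1 1 x
      simpa using this
  have h4 : 2 * dTV p (unif (2 * n)) = ∑ y, |p y - F⁻¹| := by
    simp only [dTV, unif]; rw [mul_div_cancel₀ _ two_ne_zero]
  rw [h4]
  have h5 := sq_sum_le_card_mul_sum_sq (s := (Finset.univ : Finset (Perm (Fin (2 * n)))))
    (f := fun y => |p y - F⁻¹|)
  refine h5.trans (le_of_eq ?_)
  rw [Finset.card_univ, hcard, h3, ← h2]
  simp only [sq_abs]
  have : ∀ y, (p y - F⁻¹) ^ 2 = p y ^ 2 - 2 * F⁻¹ * p y + F⁻¹ ^ 2 := fun y => by ring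
  simp only [this, Finset.sum_add_distrib, Finset.sum_sub_distrib, ← Finset.mul_sum, h1,
    Finset.sum_const, Finset.card_univ, nsmul_eq_mul, hcard]
  field_simp
  ring

end Final

/-- Cutoff upper bound for the biased random transposition shuffle:
there is a universal constant `C > 0` such that for every `c > 0` and all sufficiently
large `N = 2n`, `d_TV(P^t(id, ·), U) ≤ C e^{-c}` where `t = ⌈(N/(2b))(log N + c)⌉`. -/
theorem brt_upper_bound (a b : ℝ) (hb : 0 < b) (hba : b ≤ a) (hab : a + b = 2) :
    ∃ C : ℝ, 0 < C ∧ ∀ c : ℝ, 0 < c → ∃ n0 : ℕ, ∀ n : ℕ, n0 ≤ n →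
      ∀ A : Finset (Fin (2 * n)), A.card = n →
        dTV
          (fun y => (transMat a b A ^
            ⌈((2 * n : ℝ) / (2 * b)) * (Real.log (2 * n) + c)⌉₊) 1 y)
          (unif (2 * n)) ≤ C * Real.exp (-c) := by
  have hb1 : b ≤ 1 := by linarith
  obtain ⟨n0, h0⟩ := sum_est b hb hb1
  have hS0 : 0 ≤ ∑' k, ss k := tsum_nonneg ss_nonneg
  set K : ℝ := 1 + 2 * ((∑' k, ss k) + 1) with hK
  refine ⟨K, by positivity, fun c hc => ⟨max 1 n0, fun n hn A hA => ?_⟩⟩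
  have hn1 : 0 < n := (le_max_left _ _).trans hn
  have hn' : (0:ℝ) < n := by exact_mod_cast hn1
  have hn1' : (1:ℝ) ≤ n := by exact_mod_cast hn1
  have hL0 : 0 ≤ Real.log (2 * n) := Real.log_nonneg (by linarith)
  set t := ⌈((2 * n : ℝ) / (2 * b)) * (Real.log (2 * n) + c)⌉₊ with ht
  have htle : ((2 * n : ℝ) / (2 * b)) * (Real.log (2 * n) + c) ≤ t := Nat.le_ceil _
  have hm : (2 * n : ℝ) / b * (Real.log (2 * n) + c) ≤ ((2 * t : ℕ) : ℝ) := by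
    push_cast
    have : (2 * n : ℝ) / b * (Real.log (2 * n) + c) = 2 * (((2 * n : ℝ) / (2 * b)) * (Real.log (2 * n) + c)) := by
      field_simp
    rw [this]; linarith
  have ht0 : 0 < 2 * t := by
    have : (0:ℝ) < ((2 * t : ℕ) : ℝ) := lt_of_lt_of_le (by positivity) hm
    exact_mod_cast this
  have hsum := h0 n ((le_max_right _ _).trans hn) c hc (2 * t) hm
  have htr := trace_le a b hb hba hab hn1 A hA (2 * t) (even_two_mul t) ht0
  have hd := dTV_sq_le a b hab hn1 A hA t
  have hδ : (1 - 1 / (n:ℝ)) ^ (2 * t) ≤ Real.exp (-2 * c) := by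
    have h1 : (0:ℝ) ≤ 1 - 1 / n := by
      rw [sub_nonneg, div_le_one hn']; exact hn1'
    refine (pow_le_exp' _ _ _ h1 (Real.one_sub_le_exp_neg _)).trans (Real.exp_le_exp.mpr ?_)
    have h2 : 2 * n * c ≤ (2 * n : ℝ) / b * (Real.log (2 * n) + c) := by
      have h3 : (2 * n : ℝ) ≤ 2 * n / b := by
        rw [le_div_iff₀ hb]; nlinarith
      have h4 : c ≤ Real.log (2 * n) + c := by linarith
      exact mul_le_mul h3 h4 hc.le (by positivity)
    have h5 := h2.trans hm
    have h6 := mul_le_mul_of_nonneg_left h5 (by positivity : (0:ℝ) ≤ 1 / n)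
    have h7 : 1 / (n:ℝ) * (2 * n * c) = 2 * c := by field_simp
    linarith
  set d := dTV (fun y => (transMat a b A ^ t) 1 y) (unif (2 * n)) with hdd
  have hE : Real.exp (-2 * c) = Real.exp (-c) ^ 2 := by
    rw [← Real.exp_nat_mul]; congr 1; push_cast; ring
  have hfin : (2 * d) ^ 2 ≤ K * Real.exp (-c) ^ 2 := by
    rw [← hE, hK]; linarith
  have hK1 : 1 ≤ K := by linarith
  have hpos := Real.exp_pos (-c)
  refine abs_le_of_sq_le_sq' (a := d) ?_ (by positivity) |>.2
  have hsq : 0 < Real.exp (-c) ^ 2 := by positivity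
  rw [mul_pow]
  have : K * Real.exp (-c) ^ 2 ≤ K ^ 2 * Real.exp (-c) ^ 2 :=
    mul_le_mul_of_nonneg_right (by nlinarith) hsq.le
  nlinarith [sq_nonneg d]

end BRT
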